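/- Let p be a prime integer, k ≥ 0 an integer, and let Δ ⊂ ℝ^d be a lattice simplex of dimension d which has δ-polynomial 1 + t^{k+1} + t^{2(k+1)} + ⋯ + t^{(p²−1)(k+1)} and is not a lattice pyramid over any lower-dimensional lattice simplex. Then Δ is unimodularly equivalent to one of the following three simplices: (1) Δ(A₁) where A₁ = (1, …, 1, p²) has p²(k+1) − 2 entries equal to 1 followed by p² (here d = p²(k+1) − 1); (2) Δ(A₂) where A₂ = (1, …, 1, p, …, p, p²) has p(k+1) − 1 entries equal to 1, then (p²−1)(k+1) − 1 entries equal to p, then p² (here d = (p² + p − 1)(k+1) − 1); (3) Δ(B, C) where B = (1, …, 1, p) has p(k+1) − 1 entries equal to 1 followed by p (so s = p(k+1)), and C = (p, …, p, 1, …, 1, p) has p(k+1) entries equal to p, then p²(k+1) − 2 entries equal to 1, then p (here d = p(p+1)(k+1) − 1). -/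

import Mathlib

open scoped BigOperators Pointwise

/-- `Δ ⊆ ℝ^d` is a lattice simplex of dimension `d`:
the convex hull of `d+1` affinely independent points of `ℤ^d`. -/
def IsLatticeSimplex {d : ℕ} (Δ : Set (Fin d → ℝ)) : Prop :=
  ∃ V : Fin (d+1) → (Fin d → ℤ),
    AffineIndependent ℝ (fun i => (fun j => ((V i j : ℤ) : ℝ))) ∧
    Δ = convexHull ℝ (Set.range (fun i => (fun j => ((V i j : ℤ) : ℝ))))

/-- The number of lattice points of a subset of `ℝ^d`. -/
noncomputable def latticePointCount {d : ℕ} (S : Set (Fin d → ℝ)) : ℕ :=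
  Set.ncard {x : Fin d → ℤ | (fun j => ((x j : ℤ) : ℝ)) ∈ S}

/-- `Δ` has `δ`-polynomial `1 + t^(k+1) + t^(2(k+1)) + ⋯ + t^((v-1)(k+1))`:
the coefficientwise form of the Ehrhart series identity. -/
def HasDeltaPolySimplex (d v k : ℕ) (Δ : Set (Fin d → ℝ)) : Prop :=
  ∀ n : ℕ, latticePointCount ((n : ℝ) • Δ) =
    ∑ j ∈ Finset.range v,
      if j * (k+1) ≤ n then Nat.choose (n - j * (k+1) + d) d else 0

/-- Unimodular equivalence of subsets of `ℝ^d`. -/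
def UnimodEquiv {d : ℕ} (P Q : Set (Fin d → ℝ)) : Prop :=
  ∃ U : Matrix (Fin d) (Fin d) ℤ, ∃ w : Fin d → ℤ,
    IsUnit U.det ∧
    Q = (fun x : Fin d → ℝ =>
      Matrix.vecMul x (U.map (fun a : ℤ => (a : ℝ))) + (fun j => ((w j : ℤ) : ℝ))) '' P

/-- The lattice pyramid over `Q ⊆ ℝ^e`. -/
def Pyr {e : ℕ} (Q : Set (Fin e → ℝ)) : Set (Fin (e+1) → ℝ) :=
  convexHull ℝ
    (((fun x : Fin e → ℝ => Fin.snoc x 0) '' Q) ∪ {Fin.snoc (0 : Fin e → ℝ) 1})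

/-- The last entry of a finite integer sequence (junk value `0` if empty). -/
def lastEntry {n : ℕ} (A : Fin n → ℤ) : ℤ :=
  if h : 0 < n then A ⟨n-1, by omega⟩ else 0

/-- The last row `(a_d - a_1, …, a_d - a_{d-1}, a_d)` of the vertex matrix of `Δ(A)`. -/
def rowA {d : ℕ} (A : Fin d → ℤ) : Fin d → ℝ :=
  fun j => ((lastEntry A - if (j : ℕ) + 1 < d then A j else 0 : ℤ) : ℝ)

/-- The simplex `Δ(A)`: the convex hull of the origin, the unit vectors
`e_1, …, e_{d-1}` and the row `(a_d - a_1, …, a_d - a_{d-1}, a_d)`. -/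
def simplexA {d : ℕ} (A : Fin d → ℤ) : Set (Fin d → ℝ) :=
  convexHull ℝ (insert 0 (Set.range (fun i : Fin d =>
    if (i : ℕ) + 1 < d then (Pi.single i 1 : Fin d → ℝ) else rowA A)))

/-- The row `(b_s - b_1, …, b_s - b_{s-1}, b_s, 0, …, 0)` of the vertex matrix of `Δ(B,C)`. -/
def rowB {d : ℕ} (s : ℕ) (B : Fin s → ℤ) : Fin d → ℝ :=
  fun j =>
    if h : (j : ℕ) + 1 < s then ((lastEntry B - B ⟨(j : ℕ), by omega⟩ : ℤ) : ℝ)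
    else if (j : ℕ) + 1 = s then ((lastEntry B : ℤ) : ℝ)
    else 0

/-- The simplex `Δ(B,C)`: the convex hull of the origin, the unit vectors
`e_1, …, e_{s-1}`, the row `(b_s - b_1, …, b_s - b_{s-1}, b_s, 0, …, 0)`,
the unit vectors `e_{s+1}, …, e_{d-1}` and the row `(c_d - c_1, …, c_d - c_{d-1}, c_d)`. -/
def simplexBC {d : ℕ} (s : ℕ) (B : Fin s → ℤ) (C : Fin d → ℤ) : Set (Fin d → ℝ) :=
  convexHull ℝ (insert 0 (Set.range (fun i : Fin d =>
    if (i : ℕ) + 1 = s then rowB s B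
    else if (i : ℕ) + 1 = d then rowA C
    else (Pi.single i 1 : Fin d → ℝ))))
/-- The vectors of `ι → ℝ` all of whose coordinates are integers. -/
def intLattice (ι : Type*) : AddSubgroup (ι → ℝ) :=
  AddSubgroup.pi Set.univ fun _ => (Int.castAddHom ℝ).range

lemma mem_intLattice {ι : Type*} {t : ι → ℝ} :
    t ∈ intLattice ι ↔ ∀ i, ∃ z : ℤ, (z : ℝ) = t i := by
  simp [intLattice, AddSubgroup.mem_pi, AddSubgroup.mem_zmultiples_iff]

/-- A lattice `L` in `ι → ℝ` containing the integer points, together with the height function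
on classes modulo integer points, normalised so that the heights are `m * h` where `h` takes
each value in `{0, …, q - 1}` on exactly one class. -/
structure HeightData {ι : Type*} [Fintype ι] (L : AddSubgroup (ι → ℝ)) (q m : ℕ)
    (h : (ι → ℝ) → ℕ) : Prop where
  int_le : intLattice ι ≤ L
  lt : ∀ t ∈ L, h t < q
  sum_fract : ∀ t ∈ L, ∑ i, Int.fract (t i) = (h t : ℝ) * m
  sub_mem : ∀ s ∈ L, ∀ t ∈ L, h s = h t → s - t ∈ intLattice ι
  surj : ∀ j < q, ∃ t ∈ L, h t = j
  exists_not_int : ∀ i, ∃ t ∈ L, ¬ ∃ z : ℤ, (z : ℝ) = t i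

namespace HeightData

variable {ι : Type*} [Fintype ι] {L : AddSubgroup (ι → ℝ)} {q m : ℕ} {h : (ι → ℝ) → ℕ}

lemma congr (H : HeightData L q m h) (hm : 0 < m) {s t : ι → ℝ} (hs : s ∈ L) (ht : t ∈ L)
    (hst : s - t ∈ intLattice ι) : h s = h t := by
  have h1 : ∑ i, Int.fract (s i) = ∑ i, Int.fract (t i) := by
    refine Finset.sum_congr rfl fun i _ => ?_
    obtain ⟨z, hz⟩ := mem_intLattice.1 hst i
    have : s i = t i + z := by rw [hz]; simp
    rw [this, Int.fract_add_intCast]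
  rw [H.sum_fract s hs, H.sum_fract t ht] at h1
  have hm' : (m : ℝ) ≠ 0 := by positivity
  exact_mod_cast mul_right_cancel₀ hm' h1

lemma apply_zero (H : HeightData L q m h) (hm : 0 < m) : h 0 = 0 := by
  have := H.sum_fract 0 L.zero_mem
  have hm' : (m : ℝ) ≠ 0 := by positivity
  simpa [hm', hm.ne'] using this

lemma apply_add_le (H : HeightData L q m h) (hm : 0 < m) {s t : ι → ℝ} (hs : s ∈ L) (ht : t ∈ L) :
    h (s + t) ≤ h s + h t := by
  have h1 : ∑ i, Int.fract ((s + t) i) ≤ ∑ i, Int.fract (s i) + ∑ i, Int.fract (t i) := by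
    rw [← Finset.sum_add_distrib]
    exact Finset.sum_le_sum fun i _ => Int.fract_add_le _ _
  rw [H.sum_fract s hs, H.sum_fract t ht, H.sum_fract _ (L.add_mem hs ht), ← add_mul] at h1
  have hm' : (0 : ℝ) < m := by positivity
  exact_mod_cast le_of_mul_le_mul_right h1 hm'

lemma apply_nsmul_le (H : HeightData L q m h) (hm : 0 < m) {t : ι → ℝ} (ht : t ∈ L) (n : ℕ) :
    h (n • t) ≤ n * h t := by
  induction n with
  | zero => simp [H.apply_zero hm]
  | succ n ih =>
    rw [succ_nsmul, add_one_mul]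
    exact (H.apply_add_le hm (L.nsmul_mem ht n) ht).trans (by omega)

/-- Every class has a representative in the half-open unit cube. -/
lemma exists_rep (H : HeightData L q m h) (hm : 0 < m) {j : ℕ} (hj : j < q) :
    ∃ t ∈ L, h t = j ∧ (∀ i, 0 ≤ t i) ∧ ∑ i, t i = (j : ℝ) * m := by
  obtain ⟨t, ht, rfl⟩ := H.surj j hj
  have hint : (fun i => Int.fract (t i)) - t ∈ intLattice ι :=
    mem_intLattice.2 fun i => ⟨-⌊t i⌋, by simp [← Int.self_sub_floor]⟩
  have hL : (fun i => Int.fract (t i)) ∈ L := by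
    have := L.add_mem (H.int_le hint) ht
    rwa [sub_add_cancel] at this
  exact ⟨_, hL, H.congr hm hL ht hint, fun i => Int.fract_nonneg _, H.sum_fract t ht⟩

/-- The translation argument: the order of each class divides the number of classes. -/
lemma nsmul_mem_intLattice (H : HeightData L q m h) (hm : 0 < m) {t : ι → ℝ} (ht : t ∈ L) :
    q • t ∈ intLattice ι := by
  choose! r hrL hr using H.surj
  set e : ℕ → ℕ := fun j => h (r j + t)
  have hmem : ∀ j ∈ Finset.range q, r j + t ∈ L := fun j hj =>
    L.add_mem (hrL j (Finset.mem_range.1 hj)) ht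
  have hmaps : Set.MapsTo e (Finset.range q) (Finset.range q) := fun j hj => by
    simpa using H.lt _ (hmem j hj)
  have hinj : Set.InjOn e (Finset.range q) := fun a ha b hb hab => by
    have h1 := H.sub_mem _ (hmem a ha) _ (hmem b hb) hab
    rw [add_sub_add_right_eq_sub] at h1
    have ha' := Finset.mem_range.1 ha
    have hb' := Finset.mem_range.1 hb
    rw [← hr a ha', ← hr b hb']
    exact H.congr hm (hrL a ha') (hrL b hb') h1
  have hsum : ∑ j ∈ Finset.range q, r (e j) = ∑ j ∈ Finset.range q, r j :=
    Finset.sum_bij (fun j _ => e j) (fun j hj => hmaps hj) (fun a ha b hb => hinj ha hb)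
      (fun b hb => by
        obtain ⟨a, ha, hab⟩ := Finset.surj_on_of_inj_on_of_card_le (fun j _ => e j)
          (fun j hj => hmaps hj) (fun a b ha hb => hinj ha hb) le_rfl b hb
        exact ⟨a, ha, hab.symm⟩) (fun _ _ => rfl)
  have key : ∑ j ∈ Finset.range q, (r j + t - r (e j)) ∈ intLattice ι :=
    AddSubgroup.sum_mem _ fun j hj => by
      have hlt := H.lt _ (hmem j hj)
      exact H.sub_mem _ (hmem j hj) _ (hrL _ hlt) (hr _ hlt).symm
  rw [Finset.sum_sub_distrib, Finset.sum_add_distrib, hsum, add_sub_cancel_left] at key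
  simpa using key

/-- If `f` hits pairwise distinct classes and `h (f i) ≤ i`, then `h (f i) = i`. -/
lemma apply_eq_of_le {n : ℕ} {g : ℕ → ℕ} (hle : ∀ i < n, g i ≤ i)
    (hinj : ∀ i < n, ∀ j < i, g i ≠ g j) : ∀ i < n, g i = i := by
  intro i
  induction i using Nat.strong_induction_on with
  | _ i ih =>
    intro hi
    by_contra hne
    have hlt : g i < i := lt_of_le_of_ne (hle i hi) hne
    exact hinj i hi (g i) hlt (ih (g i) hlt (hlt.trans hi)).symm

/-- When heights add up without loss, no coordinate reaches `1`. -/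
lemma lt_one_of_sum (H : HeightData L q m h) {t : ι → ℝ} (ht : t ∈ L) (h0 : ∀ i, 0 ≤ t i)
    (hs : ∑ i, t i = (h t : ℝ) * m) (i : ι) : t i < 1 := by
  have hle : ∀ i ∈ Finset.univ, Int.fract (t i) ≤ t i := fun i _ => by
    have : (0 : ℝ) ≤ ⌊t i⌋ := by exact_mod_cast Int.floor_nonneg.2 (h0 i)
    rw [← Int.self_sub_floor]; linarith
  have := (Finset.sum_eq_sum_iff_of_le hle).1 ((H.sum_fract t ht).trans hs.symm) i
    (Finset.mem_univ i)
  rw [← this]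
  exact Int.fract_lt_one _

lemma gcd_nsmul_mem {G : Type*} [AddCommGroup G] (K : AddSubgroup G) {a b : ℕ} {t : G}
    (ha : a • t ∈ K) (hb : b • t ∈ K) : Nat.gcd a b • t ∈ K := by
  have h1 : ((Nat.gcd a b : ℕ) : ℤ) • t
      = Nat.gcdA a b • (a • t) + Nat.gcdB a b • (b • t) := by
    rw [Nat.gcd_eq_gcd_ab, add_smul, ← natCast_zsmul t a, ← natCast_zsmul t b, smul_smul,
      smul_smul, mul_comm (a : ℤ), mul_comm (b : ℤ)]
  rw [← natCast_zsmul, h1]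
  exact K.add_mem (K.zsmul_mem ha _) (K.zsmul_mem hb _)

lemma nsmul_gcd_dvd_mem {G : Type*} [AddCommGroup G] (K : AddSubgroup G) {a b : ℕ} {t : G}
    (ha : a • t ∈ K) (hab : a ∣ b) : b • t ∈ K := by
  obtain ⟨c, rfl⟩ := hab
  rw [mul_comm, mul_nsmul]
  simpa [smul_smul, mul_comm] using K.nsmul_mem ha c

variable {p : ℕ} {x : ι → ℝ}

/-- The case where the class of height `m` generates: all of its coordinates are `1 / p ^ 2`. -/
lemma cyclic_of_prime_nsmul_notMem (hp : p.Prime) (hm : 0 < m) (H : HeightData L (p ^ 2) m h)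
    (hxL : x ∈ L) (hx1 : h x = 1) (hx0 : ∀ i, 0 ≤ x i) (hxs : ∑ i, x i = m)
    (hpx : p • x ∉ intLattice ι) :
    Fintype.card ι = p ^ 2 * m ∧
      ∀ t, t ∈ L ↔ ∃ c : ℤ, t - c • (fun _ => 1 / (p : ℝ) ^ 2) ∈ intLattice ι := by
  have hp2 : (4 : ℝ) ≤ (p : ℝ) ^ 2 := by
    have : (2 : ℝ) ≤ p := by exact_mod_cast hp.two_le
    nlinarith
  have hpn : 4 ≤ p ^ 2 := by exact_mod_cast hp2
  have hord : ∀ i, 0 < i → i < p ^ 2 → i • x ∉ intLattice ι := by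
    intro i hi0 hi hmem
    have h1 := gcd_nsmul_mem _ hmem (H.nsmul_mem_intLattice hm hxL)
    obtain ⟨k, hk, hk'⟩ := (Nat.dvd_prime_pow hp).1 (Nat.gcd_dvd_right i (p ^ 2))
    rw [hk'] at h1
    have hk2 : k ≠ 2 := by
      rintro rfl
      have := Nat.le_of_dvd hi0 (hk' ▸ Nat.gcd_dvd_left i (p ^ 2))
      omega
    refine hpx (nsmul_gcd_dvd_mem _ h1 ?_)
    calc p ^ k ∣ p ^ 1 := pow_dvd_pow p (by omega)
      _ = p := pow_one p
  have hh : ∀ i < p ^ 2, h (i • x) = i := by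
    apply apply_eq_of_le
    · intro i _
      have := H.apply_nsmul_le hm hxL i
      rwa [hx1, mul_one] at this
    · intro i hi j hj hij
      have h1 := H.sub_mem _ (L.nsmul_mem hxL i) _ (L.nsmul_mem hxL j) hij
      rw [sub_eq_add_neg, ← sub_nsmul _ hj.le] at h1
      exact hord (i - j) (by omega) (by omega) h1
  have hlt : ∀ i, ((p : ℝ) ^ 2 - 1) * x i < 1 := by
    intro i
    have hc : ((p ^ 2 - 1 : ℕ) : ℝ) = (p : ℝ) ^ 2 - 1 := by
      rw [Nat.cast_sub (by omega)]; simp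
    have := H.lt_one_of_sum (L.nsmul_mem hxL (p ^ 2 - 1))
      (fun i => by simpa using mul_nonneg (Nat.cast_nonneg _) (hx0 i))
      (by
        rw [hh _ (by omega), ← hxs, Finset.mul_sum]
        simp) i
    simpa [hc] using this
  have hgen : ∀ t ∈ L, ∃ c : ℕ, t - c • x ∈ intLattice ι := fun t ht =>
    ⟨h t, H.sub_mem _ ht _ (L.nsmul_mem hxL _) (hh _ (H.lt t ht)).symm⟩
  have hx : x = fun _ => 1 / (p : ℝ) ^ 2 := by
    funext i
    obtain ⟨z, hz⟩ := mem_intLattice.1 (H.nsmul_mem_intLattice hm hxL) i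
    have hz' : (z : ℝ) = (p : ℝ) ^ 2 * x i := by simpa using hz
    have hz0 : 0 ≤ z := by
      have : (0 : ℝ) ≤ z := by rw [hz']; exact mul_nonneg (by positivity) (hx0 i)
      exact_mod_cast this
    have hz1 : z < 2 := by
      by_contra hcon
      have : (2 : ℝ) ≤ z := by exact_mod_cast not_lt.1 hcon
      nlinarith [hlt i]
    have hzne : z ≠ 0 := by
      rintro rfl
      have hxi : x i = 0 := by
        have : (p : ℝ) ^ 2 ≠ 0 := by positivity
        simpa [this, hp.ne_zero] using hz'.symm
      obtain ⟨t, ht, hti⟩ := H.exists_not_int i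
      obtain ⟨c, hc⟩ := hgen t ht
      obtain ⟨w, hw⟩ := mem_intLattice.1 hc i
      exact hti ⟨w, by simpa [hxi] using hw⟩
    have hz1 : z = 1 := by omega
    rw [hz1] at hz'
    rw [eq_div_iff (by positivity), mul_comm, ← hz', Int.cast_one]
  constructor
  · rw [hx] at hxs
    simp only [Finset.sum_const, Finset.card_univ, nsmul_eq_mul] at hxs
    rw [mul_one_div, div_eq_iff (by positivity), mul_comm] at hxs
    exact_mod_cast hxs
  · rw [← hx]
    refine fun t => ⟨fun ht => ?_, fun ⟨c, hc⟩ => ?_⟩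
    · obtain ⟨c, hc⟩ := hgen t ht
      exact ⟨c, by simpa using hc⟩
    · simpa using L.add_mem (H.int_le hc) (L.zsmul_mem hxL c)

lemma apply_lt_of_mem_sup (hp : p.Prime) (hm : 0 < m) (H : HeightData L q m h)
    (hxL : x ∈ L) (hx1 : h x = 1) (hpx : p • x ∈ intLattice ι) {t : ι → ℝ}
    (ht : t ∈ AddSubgroup.zmultiples x ⊔ intLattice ι) : h t < p := by
  obtain ⟨y, hy, z, hz, rfl⟩ := AddSubgroup.mem_sup.1 ht
  obtain ⟨c, rfl⟩ := AddSubgroup.mem_zmultiples_iff.1 hy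
  have hp0 : (0 : ℤ) < p := by exact_mod_cast hp.pos
  obtain ⟨b, hb⟩ := Int.eq_ofNat_of_zero_le (Int.emod_nonneg c hp0.ne')
  have hbp : b < p := by
    have := Int.emod_lt_of_pos c hp0
    omega
  have h1 : c • x + z - b • x ∈ intLattice ι := by
    have h2 : c • x = (c / p) • (p • x) + b • x := by
      rw [← natCast_zsmul x p, smul_smul, ← natCast_zsmul x b, ← add_smul, ← hb, mul_comm,
        Int.mul_ediv_add_emod]
    rw [h2, show (c / p) • (p • x) + b • x + z - b • x = (c / p) • (p • x) + z by abel]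
    exact AddSubgroup.add_mem _ (AddSubgroup.zsmul_mem _ hpx _) hz
  rw [H.congr hm (L.add_mem (L.zsmul_mem hxL c) (H.int_le hz)) (L.nsmul_mem hxL b) h1]
  have := H.apply_nsmul_le hm hxL b
  rw [hx1] at this
  omega

/-- The case where the class `x` of height `m` has order `p`: the class `y` of height `p * m`
generates everything together with `x`, again without loss of height. -/
lemma exists_rep_of_prime_nsmul_mem (hp : p.Prime) (hm : 0 < m) (H : HeightData L (p ^ 2) m h)
    (hxL : x ∈ L) (hx1 : h x = 1) (hx0 : ∀ i, 0 ≤ x i) (hxs : ∑ i, x i = m)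
    (hpx : p • x ∈ intLattice ι) {y : ι → ℝ}
    (hyL : y ∈ L) (hyp : h y = p) (hy0 : ∀ i, 0 ≤ y i) (hys : ∑ i, y i = p * m) :
    (∀ t ∈ L, ∃ a b : ℕ, t - (a • y + b • x) ∈ intLattice ι) ∧
    (∃ b < p, p • y - b • x ∈ intLattice ι) ∧
    ∀ i, ((p : ℝ) - 1) * (y i + x i) < 1 := by
  set K := AddSubgroup.zmultiples x ⊔ intLattice ι
  have hxK : x ∈ K := AddSubgroup.mem_sup_left (AddSubgroup.mem_zmultiples x)
  have hIK : intLattice ι ≤ K := le_sup_right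
  have hyK : ∀ r, 0 < r → r < p → r • y ∉ K := by
    intro r hr0 hr hmem
    have h1 := gcd_nsmul_mem K hmem (hIK (H.nsmul_mem_intLattice hm hyL))
    have hc : Nat.gcd r (p ^ 2) = 1 :=
      Nat.Coprime.pow_right 2 ((hp.coprime_iff_not_dvd.2 (Nat.not_dvd_of_pos_of_lt hr0 hr)).symm)
    rw [hc, one_nsmul] at h1
    exact absurd (H.apply_lt_of_mem_sup hp hm hxL hx1 hpx h1) (by omega)
  have hxI : x ∉ intLattice ι := by
    intro hmem
    have := H.congr hm hxL L.zero_mem (by simpa using hmem)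
    rw [hx1, H.apply_zero hm] at this
    omega
  set f : ℕ → ι → ℝ := fun i => (i / p) • y + (i % p) • x
  have hfL : ∀ i, f i ∈ L := fun i => L.add_mem (L.nsmul_mem hyL _) (L.nsmul_mem hxL _)
  have hh : ∀ i < p ^ 2, h (f i) = i := by
    apply apply_eq_of_le
    · intro i _
      have h1 := H.apply_add_le hm (L.nsmul_mem hyL (i / p)) (L.nsmul_mem hxL (i % p))
      have h2 := H.apply_nsmul_le hm hyL (i / p)
      have h3 := H.apply_nsmul_le hm hxL (i % p)
      rw [hyp] at h2
      rw [hx1] at h3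
      have h4 := Nat.div_add_mod i p
      rw [mul_comm] at h4
      change h ((i / p) • y + (i % p) • x) ≤ i
      omega
    · intro i hi j hj hij
      have h1 := H.sub_mem _ (hfL i) _ (hfL j) hij
      have hip : i / p < p := Nat.div_lt_of_lt_mul (by rwa [← sq])
      rcases (Nat.div_le_div_right hj.le : j / p ≤ i / p).lt_or_eq with hlt | heq
      · refine hyK (i / p - j / p) (by omega) ((Nat.sub_le _ _).trans_lt hip) ?_
        have h2 : (i / p - j / p) • y = f i - f j - (i % p) • x + (j % p) • x := by
          rw [sub_nsmul _ hlt.le]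
          simp only [f]
          abel
        rw [h2]
        exact K.add_mem (K.sub_mem (hIK h1) (K.nsmul_mem hxK _)) (K.nsmul_mem hxK _)
      · have hmod : j % p < i % p := by
          have h4 := Nat.div_add_mod i p
          have h5 := Nat.div_add_mod j p
          rw [heq] at h5
          omega
        have h2 : (i % p - j % p) • x = f i - f j := by
          rw [sub_nsmul _ hmod.le]
          simp only [f, heq]
          abel
        rw [← h2] at h1
        have h3 := gcd_nsmul_mem _ h1 hpx
        have hlt := Nat.mod_lt i hp.pos
        have hc : Nat.gcd (i % p - j % p) p = 1 :=
          (hp.coprime_iff_not_dvd.2 (Nat.not_dvd_of_pos_of_lt (by omega) (by omega))).symm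
        rw [hc, one_nsmul] at h3
        exact hxI h3
  have hgen : ∀ t ∈ L, t - f (h t) ∈ intLattice ι := fun t ht =>
    H.sub_mem _ ht _ (hfL _) (hh _ (H.lt t ht)).symm
  refine ⟨fun t ht => ⟨_, _, hgen t ht⟩, ?_, ?_⟩
  · have h1 := hgen _ (L.nsmul_mem hyL p)
    set i := h (p • y)
    have hip : i / p < p :=
      Nat.div_lt_of_lt_mul (by rw [← sq]; exact H.lt _ (L.nsmul_mem hyL p))
    refine ⟨i % p, Nat.mod_lt _ hp.pos, ?_⟩
    rcases Nat.eq_zero_or_pos (i / p) with h0 | hpos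
    · simpa only [f, h0, zero_nsmul, zero_add] using h1
    · refine absurd ?_ (hyK (p - i / p) (by omega) (by omega))
      have h2 : (p - i / p) • y = p • y - f i + (i % p) • x := by
        rw [sub_nsmul _ hip.le]
        simp only [f]
        abel
      rw [h2]
      exact K.add_mem (hIK h1) (K.nsmul_mem hxK _)
  · intro i
    have hc : ((p - 1 : ℕ) : ℝ) = (p : ℝ) - 1 := by
      rw [Nat.cast_sub hp.one_le]; simp
    have hpos := hp.pos
    have hlt : p ^ 2 - 1 < p ^ 2 := by have := pow_pos hpos 2; omega
    have hsq : p ^ 2 - 1 = p - 1 + p * (p - 1) := by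
      obtain ⟨r, rfl⟩ := Nat.exists_eq_succ_of_ne_zero hp.ne_zero
      simp only [Nat.succ_eq_add_one, Nat.add_sub_cancel]
      have : (r + 1) ^ 2 = r + (r + 1) * r + 1 := by ring
      omega
    have hf : f (p ^ 2 - 1) = (p - 1) • y + (p - 1) • x := by
      have h1 : (p ^ 2 - 1) / p = p - 1 := by
        rw [hsq, Nat.add_mul_div_left _ _ hpos, Nat.div_eq_of_lt (by omega), zero_add]
      have h2 : (p ^ 2 - 1) % p = p - 1 := by
        rw [hsq, Nat.add_mul_mod_self_left, Nat.mod_eq_of_lt (by omega)]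
      simp only [f, h1, h2]
    have hsum : ∑ i, f (p ^ 2 - 1) i = (h (f (p ^ 2 - 1)) : ℝ) * m := by
      rw [hh _ hlt, hf]
      simp only [Pi.add_apply, Pi.smul_apply]
      simp only [nsmul_eq_mul, Finset.sum_add_distrib, ← Finset.mul_sum, hxs, hys]
      rw [hsq]
      push_cast
      ring
    have h0 : ∀ i, 0 ≤ f (p ^ 2 - 1) i := fun i => by
      rw [hf]
      simp only [Pi.add_apply, Pi.smul_apply]
      simp only [nsmul_eq_mul]
      exact add_nonneg (mul_nonneg (Nat.cast_nonneg _) (hy0 i))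
        (mul_nonneg (Nat.cast_nonneg _) (hx0 i))
    have := H.lt_one_of_sum (hfL _) h0 hsum i
    rw [hf] at this
    simpa [hc, mul_add] using this

/-- The lattices with exactly one class at each of the heights `0, m, …, (p ^ 2 - 1) * m`. -/
theorem classification [DecidableEq ι] (hp : p.Prime) (hm : 0 < m)
    (H : HeightData L (p ^ 2) m h) :
    (Fintype.card ι = p ^ 2 * m ∧
      ∀ t, t ∈ L ↔ ∃ c : ℤ, t - c • (fun _ => 1 / (p : ℝ) ^ 2) ∈ intLattice ι) ∨
    ∃ S : Finset ι, S.card = p * m ∧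
      ((Sᶜ.card + m = p ^ 2 * m ∧ ∀ t, t ∈ L ↔ ∃ c : ℤ,
          t - c • (fun i => if i ∈ S then 1 / (p : ℝ) ^ 2 else 1 / (p : ℝ)) ∈ intLattice ι) ∨
       (Sᶜ.card = p ^ 2 * m ∧ ∀ t, t ∈ L ↔ ∃ a b : ℤ,
          t - (a • (fun i => if i ∈ S then 0 else 1 / (p : ℝ)) +
            b • (fun i => if i ∈ S then 1 / (p : ℝ) else 0)) ∈ intLattice ι)) := by
  have hp2 : (2 : ℝ) ≤ p := by exact_mod_cast hp.two_le
  have hp0 : (p : ℝ) ≠ 0 := by positivity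
  have hpsq : p < p ^ 2 := by nlinarith [hp.two_le]
  obtain ⟨x, hxL, hx1, hx0, hxs⟩ := H.exists_rep hm (hp.one_lt.trans hpsq)
  obtain ⟨y, hyL, hyp, hy0, hys⟩ := H.exists_rep hm hpsq
  rw [Nat.cast_one, one_mul] at hxs
  by_cases hpx : p • x ∈ intLattice ι
  swap
  · exact Or.inl (H.cyclic_of_prime_nsmul_notMem hp hm hxL hx1 hx0 hxs hpx)
  right
  obtain ⟨hgen, ⟨b, hb, hpy⟩, hlt⟩ :=
    H.exists_rep_of_prime_nsmul_mem hp hm hxL hx1 hx0 hxs hpx hyL hyp hy0 hys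
  have small : ∀ z : ℤ, ((p : ℝ) - 1) * z < p → z ≤ 1 := by
    intro z hz
    by_contra hcon
    have : (2 : ℝ) ≤ z := by exact_mod_cast (by omega : (2 : ℤ) ≤ z)
    nlinarith
  have hx : ∀ i, x i = 0 ∨ x i = 1 / p := by
    intro i
    obtain ⟨z, hz⟩ := mem_intLattice.1 hpx i
    have hz' : (z : ℝ) = p * x i := by simpa using hz
    have hz0 : 0 ≤ z := by
      have : (0 : ℝ) ≤ z := by rw [hz']; exact mul_nonneg (by positivity) (hx0 i)
      exact_mod_cast this
    have hz1 := small z (by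
      have h2 := mul_nonneg (by linarith : (0 : ℝ) ≤ p - 1) (hy0 i)
      rw [hz']
      nlinarith [hlt i])
    obtain rfl | rfl : z = 0 ∨ z = 1 := by omega
    · left
      simpa [hp0, hp.ne_zero] using hz'.symm
    · right
      rw [eq_div_iff hp0, mul_comm, ← hz', Int.cast_one]
  have hy_of_zero : ∀ i, x i = 0 → y i = 1 / p := by
    intro i hi
    obtain ⟨z, hz⟩ := mem_intLattice.1 hpy i
    have hz' : (z : ℝ) = p * y i := by simpa [hi] using hz
    have hz0 : 0 ≤ z := by
      have : (0 : ℝ) ≤ z := by rw [hz']; exact mul_nonneg (by positivity) (hy0 i)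
      exact_mod_cast this
    have hz1 := small z (by
      have h2 := hlt i
      rw [hi, add_zero] at h2
      rw [hz']
      nlinarith)
    obtain rfl | rfl : z = 0 ∨ z = 1 := by omega
    · have hyi : y i = 0 := by simpa [hp0, hp.ne_zero] using hz'.symm
      obtain ⟨t, ht, hti⟩ := H.exists_not_int i
      obtain ⟨a, c, hc⟩ := hgen t ht
      obtain ⟨w, hw⟩ := mem_intLattice.1 hc i
      exact absurd ⟨w, by simpa [hi, hyi] using hw⟩ hti
    · rw [eq_div_iff hp0, mul_comm, ← hz', Int.cast_one]
  have hy_of_ne : ∀ i, x i = 1 / p → y i = b / (p : ℝ) ^ 2 ∧ b ≤ 1 := by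
    intro i hi
    obtain ⟨w, hw⟩ := mem_intLattice.1 (H.nsmul_mem_intLattice hm hyL) i
    have hw' : (w : ℝ) = (p : ℝ) ^ 2 * y i := by simpa using hw
    have hyw : y i = w / (p : ℝ) ^ 2 := by rw [hw']; field_simp
    have hw0 : 0 ≤ w := by
      have : (0 : ℝ) ≤ w := by rw [hw']; exact mul_nonneg (by positivity) (hy0 i)
      exact_mod_cast this
    have hw1 := small w (by
      have := hlt i
      rw [hyw, hi, div_add_div _ _ (by positivity) hp0, mul_div_assoc', div_lt_one (by positivity)]
        at this
      have h2 : (p : ℝ) * (((p : ℝ) - 1) * w) < p * p := by nlinarith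
      exact lt_of_mul_lt_mul_left h2 (by positivity))
    obtain ⟨v, hv⟩ := mem_intLattice.1 hpy i
    have hv' : (p : ℝ) * v = w - b := by
      have h2 : (v : ℝ) = p * y i - b * x i := by simpa using hv
      rw [h2, hi, mul_sub, ← mul_assoc, ← sq, ← hw']
      field_simp
    have hv'' : (p : ℤ) * v = w - b := by exact_mod_cast hv'
    have hp2' := hp.two_le
    have hv0 : v = 0 := by
      by_contra hne
      rcases lt_or_gt_of_ne hne with hneg | hpos
      · have : (p : ℤ) * v ≤ p * (-1) := mul_le_mul_of_nonneg_left (by omega) (by omega)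
        omega
      · have : (p : ℤ) * 1 ≤ p * v := mul_le_mul_of_nonneg_left (by omega) (by omega)
        omega
    rw [hv0, mul_zero] at hv''
    have hwb : w = b := by omega
    exact ⟨by rw [hyw, hwb, Int.cast_natCast], by omega⟩
  set S : Finset ι := Finset.univ.filter fun i => x i ≠ 0
  have hxS : x = fun i => if i ∈ S then 1 / (p : ℝ) else 0 := by
    funext i
    by_cases hi : x i = 0
    · simp [S, hi]
    · simp [S, (hx i).resolve_left hi, hp.ne_zero]
  have hyS : y = fun i => if i ∈ S then b / (p : ℝ) ^ 2 else 1 / p := by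
    funext i
    by_cases hi : x i = 0
    · simp [S, hi, hy_of_zero i hi]
    · simp [S, hi, (hy_of_ne i ((hx i).resolve_left hi)).1]
  have hScard : S.card = p * m := by
    have h1 := hxs
    rw [hxS, Finset.sum_ite_mem, Finset.univ_inter, Finset.sum_const, nsmul_eq_mul, mul_one_div,
      div_eq_iff hp0, mul_comm] at h1
    exact_mod_cast h1
  have hysum : (S.card : ℝ) * (b / (p : ℝ) ^ 2) + (Sᶜ.card : ℝ) * (1 / p) = p * m := by
    rw [← hys, hyS, Finset.sum_ite, Finset.sum_const, Finset.sum_const, nsmul_eq_mul,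
      nsmul_eq_mul, Finset.filter_mem_eq_inter, Finset.univ_inter,
      show Finset.univ.filter (fun i => i ∉ S) = Sᶜ by ext i; simp]
  have hb1 : b ≤ 1 := by
    have hpos : 0 < S.card := hScard ▸ Nat.mul_pos hp.pos hm
    obtain ⟨i, hi⟩ := Finset.card_pos.1 hpos
    exact (hy_of_ne i ((hx i).resolve_left (Finset.mem_filter.1 hi).2)).2
  refine ⟨S, hScard, ?_⟩
  rw [hScard] at hysum
  field_simp at hysum
  obtain rfl | rfl : b = 1 ∨ b = 0 := by omega
  · left
    refine ⟨?_, ?_⟩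
    · have h2 : ((p * m + p * Sᶜ.card : ℕ) : ℝ) = ((p * (p ^ 2 * m) : ℕ) : ℝ) := by
        push_cast at hysum ⊢
        nlinarith
      have h3 : p * (Sᶜ.card + m) = p * (p ^ 2 * m) := by
        have h4 : p * m + p * Sᶜ.card = p * (p ^ 2 * m) := by exact_mod_cast h2
        rw [← h4]; ring
      exact Nat.eq_of_mul_eq_mul_left hp.pos h3
    · have hyS' : (fun i => if i ∈ S then 1 / (p : ℝ) ^ 2 else 1 / (p : ℝ)) = y := by
        rw [hyS, Nat.cast_one]
      rw [hyS']
      refine fun t => ⟨fun ht => ?_, fun ⟨c, hc⟩ => ?_⟩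
      · obtain ⟨a, c, hc⟩ := hgen t ht
        refine ⟨a + c * p, ?_⟩
        rw [one_nsmul] at hpy
        have h2 : t - ((a + c * p : ℤ)) • y = t - (a • y + c • x) - c • (p • y - x) := by
          rw [add_smul, mul_smul, natCast_zsmul, natCast_zsmul, natCast_zsmul, smul_sub]
          abel
        rw [h2]
        exact AddSubgroup.sub_mem _ hc (AddSubgroup.nsmul_mem _ hpy c)
      · simpa using L.add_mem (H.int_le hc) (L.zsmul_mem hyL c)
  · right
    refine ⟨?_, ?_⟩
    · have h2 : ((p * Sᶜ.card : ℕ) : ℝ) = ((p * (p ^ 2 * m) : ℕ) : ℝ) := by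
        push_cast at hysum ⊢
        nlinarith
      exact Nat.eq_of_mul_eq_mul_left hp.pos (by exact_mod_cast h2)
    · have hyS' : (fun i => if i ∈ S then 0 else 1 / (p : ℝ)) = y := by
        rw [hyS, Nat.cast_zero, zero_div]
      rw [hyS', ← hxS]
      refine fun t => ⟨fun ht => ?_, fun ⟨a, c, hc⟩ => ?_⟩
      · obtain ⟨a, c, hc⟩ := hgen t ht
        exact ⟨a, c, by simpa using hc⟩
      · simpa using L.add_mem (H.int_le hc)
          (L.add_mem (L.zsmul_mem hyL a) (L.zsmul_mem hxL c))

end HeightData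

/-- The lattice polytope spanned by a family of integer points. -/
def latticeHull {n d : ℕ} (V : Fin n → Fin d → ℤ) : Set (Fin d → ℝ) :=
  convexHull ℝ (Set.range fun i j => (V i j : ℝ))

/-- The matrix whose rows are the homogenised vertices `(V i, 1)`. -/
def homMat {d : ℕ} (V : Fin (d + 1) → Fin d → ℤ) : Matrix (Fin (d + 1)) (Fin (d + 1)) ℝ :=
  Matrix.of fun i => Fin.snoc (α := fun _ => ℝ) (fun j => (V i j : ℝ)) 1

/-- The coefficient vectors that combine the homogenised vertices to an integer point. -/
def relLattice {d : ℕ} (V : Fin (d + 1) → Fin d → ℤ) : AddSubgroup (Fin (d + 1) → ℝ) :=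
  (intLattice (Fin (d + 1))).comap (homMat V).vecMulLinear.toAddMonoidHom

section Lattice

variable {d : ℕ} {V V' : Fin (d + 1) → Fin d → ℤ}

@[simp] lemma homMat_castSucc (i : Fin (d + 1)) (j : Fin d) : homMat V i j.castSucc = V i j := by
  simp [homMat]

@[simp] lemma homMat_last (i : Fin (d + 1)) : homMat V i (Fin.last d) = 1 := by
  simp [homMat]

lemma mem_relLattice_iff_vecMul {t : Fin (d + 1) → ℝ} :
    t ∈ relLattice V ↔ Matrix.vecMul t (homMat V) ∈ intLattice (Fin (d + 1)) := Iff.rfl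

lemma mem_relLattice {t : Fin (d + 1) → ℝ} :
    t ∈ relLattice V ↔ (∀ j, ∃ z : ℤ, (z : ℝ) = ∑ i, t i * V i j) ∧ ∃ z : ℤ, (z : ℝ) = ∑ i, t i := by
  rw [mem_relLattice_iff_vecMul, mem_intLattice, Fin.forall_fin_succ']
  simp [Matrix.vecMul, dotProduct]

lemma intLattice_le_relLattice : intLattice (Fin (d + 1)) ≤ relLattice V := by
  intro t ht
  choose z hz using mem_intLattice.1 ht
  refine mem_relLattice.2 ⟨fun j => ⟨∑ i, z i * V i j, ?_⟩, ⟨∑ i, z i, ?_⟩⟩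
  · simp [hz]
  · simp [hz]

lemma det_homMat_ne_zero (hV : AffineIndependent ℝ fun i j => (V i j : ℝ)) :
    (homMat V).det ≠ 0 := by
  intro hdet
  obtain ⟨t, ht0, ht⟩ := Matrix.exists_vecMul_eq_zero_iff.2 hdet
  refine ht0 (funext fun i => ?_)
  refine (affineIndependent_iff.1 hV) Finset.univ t ?_ ?_ i (Finset.mem_univ i)
  · simpa [Matrix.vecMul, dotProduct] using congrFun ht (Fin.last d)
  · funext j
    simpa [Matrix.vecMul, dotProduct] using congrFun ht j.castSucc

lemma det_ne_zero_of_relLattice_eq (hV : (homMat V).det ≠ 0) (h : relLattice V = relLattice V') :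
    (homMat V').det ≠ 0 := by
  intro hdet
  obtain ⟨t, ht0, ht⟩ := Matrix.exists_vecMul_eq_zero_iff.2 hdet
  have hmem : ∀ r : ℝ, r • t ∈ relLattice V := fun r => by
    rw [h, mem_relLattice_iff_vecMul, Matrix.smul_vecMul, ht, smul_zero]
    exact AddSubgroup.zero_mem _
  refine hV (Matrix.exists_vecMul_eq_zero_iff.1 ⟨t, ht0, funext fun j => ?_⟩)
  by_contra hne
  obtain ⟨z, hz⟩ := mem_intLattice.1
    (mem_relLattice_iff_vecMul.1 (hmem (1 / 2 / Matrix.vecMul t (homMat V) j))) j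
  rw [Matrix.smul_vecMul, Pi.smul_apply, smul_eq_mul, div_mul_cancel₀ _ hne] at hz
  have : (2 * z : ℝ) = 1 := by rw [hz]; norm_num
  have : 2 * z = 1 := by exact_mod_cast this
  omega

lemma inv_row_mem_relLattice (hV : (homMat V).det ≠ 0) (i : Fin (d + 1)) :
    (homMat V)⁻¹ i ∈ relLattice V := by
  rw [mem_relLattice_iff_vecMul, ← Matrix.mul_apply_eq_vecMul,
    Matrix.nonsing_inv_mul _ (isUnit_iff_ne_zero.2 hV)]
  exact mem_intLattice.2 fun j => ⟨(1 : Matrix _ _ ℤ) i j, by simp [Matrix.one_apply]⟩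

lemma exists_intMatrix (hV : (homMat V).det ≠ 0) (h : relLattice V ≤ relLattice V') :
    ∃ X : Matrix (Fin (d + 1)) (Fin (d + 1)) ℤ,
      X.map (fun a : ℤ => (a : ℝ)) = (homMat V)⁻¹ * homMat V' := by
  choose X hX using fun i => mem_intLattice.1
    (mem_relLattice_iff_vecMul.1 (h (inv_row_mem_relLattice hV i)))
  refine ⟨X, ?_⟩
  ext i j
  rw [Matrix.mul_apply_eq_vecMul, ← hX]
  rfl

/-- The affine map `x ↦ x * U + w`. -/
def vecMulAffine {d : ℕ} (U : Matrix (Fin d) (Fin d) ℤ) (w : Fin d → ℤ) :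
    (Fin d → ℝ) →ᵃ[ℝ] (Fin d → ℝ) :=
  (Matrix.vecMulLinear (U.map fun a : ℤ => (a : ℝ))).toAffineMap +
    AffineMap.const ℝ _ fun j => (w j : ℝ)

lemma vecMulAffine_apply {d : ℕ} (U : Matrix (Fin d) (Fin d) ℤ) (w : Fin d → ℤ) (x : Fin d → ℝ) :
    vecMulAffine U w x = Matrix.vecMul x (U.map fun a : ℤ => (a : ℝ)) + fun j => (w j : ℝ) := rfl

lemma vecMulAffine_intCast {d : ℕ} {U : Matrix (Fin d) (Fin d) ℤ} {w x y : Fin d → ℤ}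
    (h : ∀ j, y j = ∑ k, x k * U k j + w j) :
    vecMulAffine U w (fun j => (x j : ℝ)) = fun j => (y j : ℝ) := by
  funext j
  simp [vecMulAffine_apply, h, Matrix.vecMul, dotProduct]

lemma unimodEquiv_of_vecMul {n d : ℕ} {V V' : Fin n → Fin d → ℤ} {U : Matrix (Fin d) (Fin d) ℤ}
    {w : Fin d → ℤ} (hU : IsUnit U.det) (h : ∀ i j, V' i j = ∑ k, V i k * U k j + w j) :
    UnimodEquiv (latticeHull V) (latticeHull V') := by
  refine ⟨U, w, hU, ?_⟩
  change latticeHull V' = vecMulAffine U w '' latticeHull V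
  rw [latticeHull, latticeHull, AffineMap.image_convexHull, ← Set.range_comp]
  congr 2
  funext i
  exact (vecMulAffine_intCast (h i)).symm

/-- A simplex is determined up to unimodular equivalence by its lattice of relations. -/
theorem unimodEquiv_of_relLattice_eq (hV : (homMat V).det ≠ 0)
    (h : relLattice V = relLattice V') : UnimodEquiv (latticeHull V) (latticeHull V') := by
  have hV' := det_ne_zero_of_relLattice_eq hV h
  obtain ⟨X, hX⟩ := exists_intMatrix hV h.le
  obtain ⟨Y, hY⟩ := exists_intMatrix hV' h.ge
  have hVu := isUnit_iff_ne_zero.2 hV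
  have hVu' := isUnit_iff_ne_zero.2 hV'
  have hXY : X * Y = 1 := by
    have h1 : X.map (fun a : ℤ => (a : ℝ)) * Y.map (fun a : ℤ => (a : ℝ)) = 1 := by
      rw [hX, hY, Matrix.mul_assoc, Matrix.mul_nonsing_inv_cancel_left _ _ hVu',
        Matrix.nonsing_inv_mul _ hVu]
    ext i j
    have h2 := congrFun (congrFun h1 i) j
    simp only [Matrix.mul_apply, Matrix.map_apply, Matrix.one_apply] at h2 ⊢
    exact_mod_cast h2
  have hWX : homMat V * X.map (fun a : ℤ => (a : ℝ)) = homMat V' := by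
    rw [hX, Matrix.mul_nonsing_inv_cancel_left _ _ hVu]
  have hcol : ∀ i : Fin d, X i.castSucc (Fin.last d) = 0 := by
    intro i
    have h1 : ((homMat V)⁻¹ * homMat V') i.castSucc (Fin.last d)
        = ((homMat V)⁻¹ * homMat V) i.castSucc (Fin.last d) := by
      simp [Matrix.mul_apply]
    rw [Matrix.nonsing_inv_mul _ hVu, Matrix.one_apply_ne (Fin.castSucc_lt_last i).ne, ← hX,
      Matrix.map_apply] at h1
    exact_mod_cast h1
  refine unimodEquiv_of_vecMul (U := X.submatrix Fin.castSucc Fin.castSucc)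
    (w := fun j => X (Fin.last d) j.castSucc) ?_ fun i j => ?_
  · refine Matrix.isUnit_det_of_right_inverse (B := Y.submatrix Fin.castSucc Fin.castSucc) ?_
    ext i j
    have h1 := congrFun (congrFun hXY i.castSucc) j.castSucc
    rw [Matrix.mul_apply, Fin.sum_univ_castSucc, hcol, zero_mul, add_zero] at h1
    simpa [Matrix.mul_apply, Matrix.one_apply] using h1
  · have h1 := congrFun (congrFun hWX i) j.castSucc
    rw [Matrix.mul_apply, Fin.sum_univ_castSucc, homMat_castSucc, homMat_last, one_mul] at h1
    have h2 : ((∑ k : Fin d, V i k * X k.castSucc j.castSucc + X (Fin.last d) j.castSucc : ℤ) : ℝ)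
        = (V' i j : ℝ) := by
      rw [← h1]
      simp
    exact (Int.cast_injective h2).symm

lemma latticeHull_comp_equiv (σ : Equiv.Perm (Fin (d + 1))) :
    latticeHull (V ∘ σ) = latticeHull V := by
  unfold latticeHull
  congr 1
  exact σ.surjective.range_comp fun i j => (V i j : ℝ)

lemma mem_relLattice_comp_equiv (σ : Equiv.Perm (Fin (d + 1))) {t : Fin (d + 1) → ℝ} :
    t ∈ relLattice (V ∘ σ) ↔ t ∘ σ.symm ∈ relLattice V := by
  rw [mem_relLattice, mem_relLattice, ← Equiv.sum_comp σ (t ∘ σ.symm)]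
  have h : ∀ j, ∑ i, (t ∘ σ.symm) i * (V i j : ℝ) = ∑ i, t i * ((V ∘ σ) i j : ℝ) := fun j => by
    rw [← Equiv.sum_comp σ]
    simp
  simp only [h]
  simp

theorem unimodEquiv_of_relLattice_perm (hV : (homMat V).det ≠ 0) (σ : Equiv.Perm (Fin (d + 1)))
    (h : ∀ t, t ∈ relLattice V ↔ t ∘ σ.symm ∈ relLattice V') :
    UnimodEquiv (latticeHull V) (latticeHull V') := by
  rw [← latticeHull_comp_equiv (V := V') σ]
  refine unimodEquiv_of_relLattice_eq hV (AddSubgroup.ext fun t => ?_)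
  rw [h, mem_relLattice_comp_equiv]

end Lattice

section Counting

lemma convexHull_range_eq_image_stdSimplex {ι E : Type*} [Fintype ι] [AddCommGroup E] [Module ℝ E]
    (v : ι → E) :
    convexHull ℝ (Set.range v) = Fintype.linearCombination ℝ v '' stdSimplex ℝ ι := by
  classical
  rw [← convexHull_basis_eq_stdSimplex, LinearMap.image_convexHull, ← Set.range_comp]
  congr 2
  funext i
  simp [Fintype.linearCombination_apply, ite_smul]

lemma mem_smul_latticeHull {d : ℕ} {V : Fin (d + 1) → Fin d → ℤ} {n : ℕ} {x : Fin d → ℝ} :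
    x ∈ (n : ℝ) • latticeHull V ↔
      ∃ t : Fin (d + 1) → ℝ, (∀ i, 0 ≤ t i) ∧ ∑ i, t i = n ∧ ∀ j, ∑ i, t i * V i j = x j := by
  rw [latticeHull, convexHull_range_eq_image_stdSimplex, Set.mem_smul_set]
  constructor
  · rintro ⟨_, ⟨w, ⟨hw0, hw1⟩, rfl⟩, rfl⟩
    refine ⟨(n : ℝ) • w, fun i => mul_nonneg n.cast_nonneg (hw0 i), ?_, fun j => ?_⟩
    · simp [← Finset.mul_sum, hw1]
    · simp [Fintype.linearCombination_apply, Finset.mul_sum, mul_assoc]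
  · rintro ⟨t, ht0, ht1, htx⟩
    rcases Nat.eq_zero_or_pos n with rfl | hn
    · have ht : ∀ i, t i = 0 := fun i => by
        rw [Nat.cast_zero] at ht1
        exact (Finset.sum_eq_zero_iff_of_nonneg fun i _ => ht0 i).1 ht1 i (Finset.mem_univ i)
      refine ⟨_, ⟨_, single_mem_stdSimplex ℝ (0 : Fin (d + 1)), rfl⟩, ?_⟩
      funext j
      simp [← htx, ht]
    · have hne : (n : ℝ) ≠ 0 := by positivity
      refine ⟨_, ⟨(n : ℝ)⁻¹ • t, ⟨fun i => mul_nonneg (by positivity) (ht0 i), ?_⟩, rfl⟩, ?_⟩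
      · simp [← Finset.mul_sum, ht1, hne]
      · funext j
        simp [← htx, Fintype.linearCombination_apply, Finset.mul_sum, hne]

/-- Elements of `L` with nonnegative coordinates summing to `n`. -/
def coneSlice {ι : Type*} [Fintype ι] (L : AddSubgroup (ι → ℝ)) (n : ℕ) : Set (ι → ℝ) :=
  {t | t ∈ L ∧ (∀ i, 0 ≤ t i) ∧ ∑ i, t i = n}

/-- Elements of `L` in the half-open unit cube whose coordinates sum to `n`. -/
def boxSlice {ι : Type*} [Fintype ι] (L : AddSubgroup (ι → ℝ)) (n : ℕ) : Set (ι → ℝ) :=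
  {t | t ∈ L ∧ (∀ i, 0 ≤ t i ∧ t i < 1) ∧ ∑ i, t i = n}

lemma latticePointCount_smul_latticeHull {d : ℕ} {V : Fin (d + 1) → Fin d → ℤ}
    (hV : (homMat V).det ≠ 0) (n : ℕ) :
    latticePointCount ((n : ℝ) • latticeHull V) = Nat.card (coneSlice (relLattice V) n) := by
  rw [latticePointCount, ← Nat.card_coe_set_eq]
  refine Nat.card_congr (Equiv.ofBijective
    (fun x => ⟨Classical.choose (mem_smul_latticeHull.1 x.2), ?_⟩) ⟨?_, ?_⟩)
  · obtain ⟨h0, h1, h2⟩ := Classical.choose_spec (mem_smul_latticeHull.1 x.2)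
    exact ⟨mem_relLattice.2 ⟨fun j => ⟨x.1 j, (h2 j).symm⟩, ⟨n, by rw [h1]; simp⟩⟩, h0, h1⟩
  · intro x y hxy
    have hx := (Classical.choose_spec (mem_smul_latticeHull.1 x.2)).2.2
    have hy := (Classical.choose_spec (mem_smul_latticeHull.1 y.2)).2.2
    rw [Subtype.mk.injEq] at hxy
    refine Subtype.ext (funext fun j => ?_)
    have h := hx j
    rw [hxy, hy j] at h
    exact_mod_cast h.symm
  · rintro ⟨t, htL, ht0, ht1⟩
    obtain ⟨hz, -⟩ := mem_relLattice.1 htL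
    choose z hz using hz
    have hmem := mem_smul_latticeHull.2 ⟨t, ht0, ht1, fun j => (hz j).symm⟩
    refine ⟨⟨z, hmem⟩, Subtype.ext ?_⟩
    obtain ⟨-, h1, h2⟩ := Classical.choose_spec (mem_smul_latticeHull.1 hmem)
    refine Matrix.vecMul_injective_of_isUnit
      ((Matrix.isUnit_iff_isUnit_det _).2 (isUnit_iff_ne_zero.2 hV)) (funext fun j => ?_)
    refine Fin.lastCases ?_ (fun j => ?_) j
    · simpa [Matrix.vecMul, dotProduct, ht1] using h1
    · simpa [Matrix.vecMul, dotProduct, ← hz j] using h2 j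

lemma card_natVec_sum_eq (d n : ℕ) :
    Nat.card {u : Fin (d + 1) → ℕ // ∑ i, u i = n} = (n + d).choose d := by
  classical
  rw [← Nat.card_congr (Sym.equivNatSumOfFintype (Fin (d + 1)) n), Nat.card_eq_fintype_card,
    Sym.card_sym_eq_choose, Fintype.card_fin, show d + 1 + n - 1 = n + d by omega]
  exact (Nat.choose_symm_add)

lemma finite_natVec_sum_eq (d n : ℕ) : Finite {u : Fin (d + 1) → ℕ // ∑ i, u i = n} :=
  Nat.finite_of_card_ne_zero (by
    rw [card_natVec_sum_eq]
    exact Nat.ne_of_gt (Nat.choose_pos (by omega)))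

/-- Splitting each element of the cone into its integral and fractional parts. -/
lemma card_coneSlice {d : ℕ} {L : AddSubgroup (Fin (d + 1) → ℝ)} (hI : intLattice _ ≤ L)
    (hsum : ∀ t ∈ L, ∃ z : ℤ, (z : ℝ) = ∑ i, t i) (hfin : ∀ n, Finite (boxSlice L n)) (n : ℕ) :
    Nat.card (coneSlice L n) =
      ∑ h ∈ Finset.range (n + 1), Nat.card (boxSlice L h) * (n - h + d).choose d := by
  have hfin' := finite_natVec_sum_eq d
  have hnat : ∀ u : Fin (d + 1) → ℕ, (fun i => (u i : ℝ)) ∈ L := fun u =>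
    hI (mem_intLattice.2 fun i => ⟨u i, by simp⟩)
  let F : (Σ h : Fin (n + 1), boxSlice L h × {u : Fin (d + 1) → ℕ // ∑ i, u i = n - h}) →
      coneSlice L n := fun x => ⟨x.2.1.1 + fun i => (x.2.2.1 i : ℝ), by
    obtain ⟨h, ⟨b, hbL, hb, hbs⟩, ⟨u, hu⟩⟩ := x
    refine ⟨L.add_mem hbL (hnat u), fun i => add_nonneg (hb i).1 (Nat.cast_nonneg _), ?_⟩
    have : (∑ i, (u i : ℝ)) = n - h := by
      rw [← Nat.cast_sub (by omega), ← hu]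
      simp
    simp [Finset.sum_add_distrib, hbs, this]⟩
  have hF : Function.Bijective F := by
    constructor
    · rintro ⟨h, ⟨b, hbL, hb, hbs⟩, ⟨u, hu⟩⟩ ⟨h', ⟨b', hbL', hb', hbs'⟩, ⟨u', hu'⟩⟩ hxy
      have hxy' : ∀ i, b i + u i = b' i + u' i := fun i =>
        congrFun (Subtype.ext_iff.1 hxy) i
      have hbb : b = b' := funext fun i => by
        have h1 := congrArg Int.fract (hxy' i)
        rwa [Int.fract_add_natCast, Int.fract_add_natCast, Int.fract_eq_self.2 (hb i),
          Int.fract_eq_self.2 (hb' i)] at h1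
      have huu : u = u' := funext fun i => by
        have h1 := hxy' i
        rw [hbb] at h1
        exact_mod_cast add_left_cancel h1
      subst hbb huu
      have hhh : h = h' := Fin.ext (by exact_mod_cast hbs.symm.trans hbs')
      subst hhh
      rfl
    · rintro ⟨t, htL, ht0, hts⟩
      set u : Fin (d + 1) → ℕ := fun i => ⌊t i⌋₊
      set b : Fin (d + 1) → ℝ := t - fun i => (u i : ℝ)
      have hbL : b ∈ L := L.sub_mem htL (hnat u)
      have hb : ∀ i, 0 ≤ b i ∧ b i < 1 := fun i =>
        ⟨sub_nonneg.2 (Nat.floor_le (ht0 i)), sub_lt_iff_lt_add'.2 (Nat.lt_floor_add_one _)⟩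
      obtain ⟨z, hz⟩ := hsum b hbL
      have hz0 : 0 ≤ z := by
        have : (0 : ℝ) ≤ z := by rw [hz]; exact Finset.sum_nonneg fun i _ => (hb i).1
        exact_mod_cast this
      obtain ⟨h, rfl⟩ := Int.eq_ofNat_of_zero_le hz0
      have hs : ((h + ∑ i, u i : ℕ) : ℝ) = n := by
        rw [← hts]
        push_cast at hz ⊢
        rw [hz]
        simp [b]
      have hs' : h + ∑ i, u i = n := by exact_mod_cast hs
      refine ⟨⟨⟨h, by omega⟩, ⟨b, hbL, hb, by simpa using hz.symm⟩, ⟨u, ?_⟩⟩, ?_⟩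
      · change ∑ i, u i = n - h
        omega
      · exact Subtype.ext (by simp [F, b])
  rw [← Nat.card_congr (Equiv.ofBijective F hF), Nat.card_sigma, Finset.sum_range]
  exact Finset.sum_congr rfl fun h _ => by rw [Nat.card_prod, card_natVec_sum_eq]

/-- The coefficients of an Ehrhart polynomial in the binomial basis are unique. -/
lemma eq_of_sum_mul_choose_eq {d : ℕ} {a b : ℕ → ℕ}
    (hab : ∀ n, ∑ h ∈ Finset.range (n + 1), a h * (n - h + d).choose d =
      ∑ h ∈ Finset.range (n + 1), b h * (n - h + d).choose d) (n : ℕ) : a n = b n := by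
  induction n using Nat.strong_induction_on with
  | _ n ih =>
    have h1 := hab n
    rw [Finset.sum_range_succ, Finset.sum_range_succ, Finset.sum_congr rfl fun h hh => by
      rw [ih h (Finset.mem_range.1 hh)]] at h1
    simpa using h1

lemma sum_ite_choose_eq (d v m n : ℕ) :
    (∑ j ∈ Finset.range v, if j * m ≤ n then (n - j * m + d).choose d else 0) =
      ∑ h ∈ Finset.range (n + 1),
        (∑ j ∈ Finset.range v, if j * m = h then 1 else 0) * (n - h + d).choose d := by
  simp_rw [Finset.sum_mul]
  rw [Finset.sum_comm]
  refine Finset.sum_congr rfl fun j _ => ?_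
  simp [ite_mul]

end Counting

section Pyramid

lemma isUnit_map_of_isUnit_det {d : ℕ} {U : Matrix (Fin d) (Fin d) ℤ} (hU : IsUnit U.det) :
    IsUnit (U.map fun a : ℤ => (a : ℝ)) := by
  rw [Matrix.isUnit_iff_isUnit_det]
  have := hU.map (Int.castRingHom ℝ)
  rwa [RingHom.map_det] at this

lemma vecMulAffine_injective {d : ℕ} {U : Matrix (Fin d) (Fin d) ℤ} (hU : IsUnit U.det)
    (w : Fin d → ℤ) : Function.Injective (vecMulAffine U w) := fun x y hxy => by
  rw [vecMulAffine_apply, vecMulAffine_apply, add_left_inj] at hxy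
  exact Matrix.vecMul_injective_of_isUnit (isUnit_map_of_isUnit_det hU) hxy

/-- A surjective integral functional is the last coordinate of a unimodular map. -/
lemma exists_unimodular_last_eq {e : ℕ} (φ : (Fin (e + 1) → ℤ) →ₗ[ℤ] ℤ) {u : Fin (e + 1) → ℤ}
    (hu : φ u = 1) :
    ∃ U : Matrix (Fin (e + 1)) (Fin (e + 1)) ℤ, IsUnit U.det ∧
      ∀ x, Matrix.vecMul x U (Fin.last e) = φ x := by
  have hrank : Module.finrank ℤ (LinearMap.ker φ) = e := by
    have h1 := (LinearMap.ker φ).finrank_quotient_add_finrank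
    have h2 : Function.Surjective φ := fun z =>
      ⟨z • u, by rw [map_smul, hu, smul_eq_mul, mul_one]⟩
    rw [(φ.quotKerEquivOfSurjective h2).finrank_eq, Module.finrank_self,
      Module.finrank_fintype_fun_eq_card, Fintype.card_fin] at h1
    omega
  let b := Module.finBasisOfFinrankEq ℤ (LinearMap.ker φ) hrank
  let B := Module.Basis.mkFinCons u b
    (fun c x hx h => by
      have := congrArg φ h
      rw [map_add, map_smul, hu, LinearMap.mem_ker.1 hx] at this
      simpa using this)
    (fun z => ⟨-φ z, by
      rw [LinearMap.mem_ker, map_add, map_smul, hu, smul_eq_mul, mul_one, add_neg_cancel]⟩)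
  have hB : ∀ x, B.repr x 0 = φ x := fun x => by
    conv_rhs => rw [← B.sum_repr x]
    rw [map_sum, Fin.sum_univ_succ, Finset.sum_eq_zero fun j _ => ?_]
    · simp only [map_smul, B, Module.Basis.coe_mkFinCons, Fin.cons_zero, hu, smul_eq_mul, mul_one,
        add_zero]
    · simp only [map_smul, B, Module.Basis.coe_mkFinCons, Fin.cons_succ, Function.comp_apply,
        LinearMap.mem_ker.1 (b j).2, smul_zero]
  let B' := B.reindex (Equiv.swap 0 (Fin.last e))
  refine ⟨(B'.toMatrix (Pi.basisFun ℤ (Fin (e + 1)))).transpose, ?_, fun x => ?_⟩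
  · rw [Matrix.det_transpose]
    exact Matrix.isUnit_det_of_right_inverse (B'.toMatrix_mul_toMatrix_flip _)
  · rw [Matrix.vecMul_transpose]
    have h1 := congrFun (Module.Basis.toMatrix_mulVec_repr (Pi.basisFun ℤ (Fin (e + 1))) B' x)
      (Fin.last e)
    have h2 : ⇑((Pi.basisFun ℤ (Fin (e + 1))).repr x) = x := funext fun _ => Pi.basisFun_repr ..
    rw [h2] at h1
    rw [h1, ← hB, B.repr_reindex_apply, Equiv.symm_swap, Equiv.swap_apply_right]

/-- If a barycentric coordinate is integral on the lattice of relations, then the simplex is a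
lattice pyramid with apex at the corresponding vertex. -/
theorem exists_pyramid {e : ℕ} {V : Fin (e + 2) → Fin (e + 1) → ℤ}
    (hV : AffineIndependent ℝ fun i j => (V i j : ℝ)) (i : Fin (e + 2))
    (hi : ∀ t ∈ relLattice V, ∃ z : ℤ, (z : ℝ) = t i) :
    ∃ Q : Set (Fin e → ℝ), IsLatticeSimplex Q ∧ UnimodEquiv (latticeHull V) (Pyr Q) := by
  have hdet := isUnit_iff_ne_zero.2 (det_homMat_ne_zero hV)
  choose c hc using fun k => hi _ (inv_row_mem_relLattice (det_homMat_ne_zero hV) k)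
  have hWc : ∀ j, ∑ k : Fin (e + 1), V j k * c k.castSucc + c (Fin.last _) =
      if j = i then 1 else 0 := fun j => by
    have h1 := congrFun (congrFun (Matrix.mul_nonsing_inv (homMat V) hdet) j) i
    rw [Matrix.mul_apply, Fin.sum_univ_castSucc] at h1
    simp only [← hc, homMat_castSucc, homMat_last, Matrix.one_apply] at h1
    rw [one_mul] at h1
    exact_mod_cast h1
  let φ : (Fin (e + 1) → ℤ) →ₗ[ℤ] ℤ :=
    ∑ k, c k.castSucc • LinearMap.proj (R := ℤ) (φ := fun _ => ℤ) k
  have hφ : ∀ x, φ x = ∑ k, x k * c k.castSucc := fun x => by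
    simp [φ, mul_comm]
  have hφV : ∀ j, φ (V j) = (if j = i then 1 else 0) - c (Fin.last _) := fun j => by
    rw [hφ, ← hWc]
    ring
  have hu : φ (V i - V (i.succAbove 0)) = 1 := by
    rw [map_sub, hφV, hφV, if_pos rfl, if_neg (Fin.succAbove_ne i 0)]
    ring
  obtain ⟨U, hU, hlast⟩ := exists_unimodular_last_eq φ hu
  let w : Fin (e + 1) → ℤ := Pi.single (Fin.last e) 1 - Matrix.vecMul (V i) U
  let V' : Fin (e + 2) → Fin (e + 1) → ℤ := fun j => Matrix.vecMul (V j) U + w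
  have hV' : ∀ j k, V' j k = ∑ l, V j l * U l k + w k := fun j k => rfl
  have hV'i : V' i = Pi.single (Fin.last e) 1 := by simp [V', w]
  have hV'last : ∀ j, V' (i.succAbove j) (Fin.last e) = 0 := fun j => by
    simp [V', w, hlast, hφV, Fin.succAbove_ne]
  let q : Fin (e + 1) → Fin e → ℤ := fun j k => V' (i.succAbove j) k.castSucc
  let S : (Fin e → ℝ) →ₗ[ℝ] (Fin (e + 1) → ℝ) :=
    { toFun := fun x => Fin.snoc (α := fun _ => ℝ) x 0
      map_add' := fun x y => by
        funext k
        refine Fin.lastCases ?_ (fun k => ?_) k <;> simp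
      map_smul' := fun r x => by
        funext k
        refine Fin.lastCases ?_ (fun k => ?_) k <;> simp }
  have hSq : ∀ j, S (fun k => (q j k : ℝ)) = fun k => (V' (i.succAbove j) k : ℝ) := fun j => by
    funext k
    refine Fin.lastCases ?_ (fun k => ?_) k
    · simp [S, hV'last]
    · simp [S, q]
  refine ⟨latticeHull q, ⟨q, ?_, rfl⟩, ?_⟩
  · refine AffineIndependent.of_comp S.toAffineMap ?_
    have h1 := (hV.comp_embedding i.succAboveEmb).map' (vecMulAffine U w)
      (vecMulAffine_injective hU w)
    have h2 : (S.toAffineMap ∘ fun j k => (q j k : ℝ)) =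
        vecMulAffine U w ∘ (fun i j => (V i j : ℝ)) ∘ i.succAboveEmb :=
      funext fun j => (hSq j).trans (vecMulAffine_intCast (hV' (i.succAbove j))).symm
    rw [← h2] at h1
    exact h1
  · have hPyr : Pyr (latticeHull q) = latticeHull V' := by
      change convexHull ℝ ((S '' latticeHull q) ∪ _) = _
      rw [latticeHull, LinearMap.image_convexHull, convexHull_convexHull_union_left, latticeHull]
      congr 1
      ext x
      simp only [Set.mem_union, Set.mem_image, Set.mem_range, exists_exists_eq_and, hSq,
        Set.mem_singleton_iff]
      have hapex : (Fin.snoc (0 : Fin e → ℝ) 1 : Fin (e + 1) → ℝ) = fun k => (V' i k : ℝ) := by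
        rw [hV'i]
        funext k
        refine Fin.lastCases ?_ (fun k => ?_) k
        · simp
        · simp [Fin.castSucc_ne_last]
      rw [hapex, i.exists_iff_succAbove, or_comm, eq_comm]
    rw [hPyr]
    exact unimodEquiv_of_vecMul hU hV'

end Pyramid

section Heights

lemma exists_heightData {d q k : ℕ} {V : Fin (d + 1) → Fin d → ℤ} (hq : 0 < q)
    (hV : (homMat V).det ≠ 0) (hδ : HasDeltaPolySimplex d q k (latticeHull V))
    (hint : ∀ i, ∃ t ∈ relLattice V, ¬ ∃ z : ℤ, (z : ℝ) = t i) :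
    ∃ h, HeightData (relLattice V) q (k + 1) h := by
  have hcone : ∀ n, Nat.card (coneSlice (relLattice V) n) =
      ∑ j ∈ Finset.range q, if j * (k + 1) ≤ n then (n - j * (k + 1) + d).choose d else 0 :=
    fun n => by rw [← latticePointCount_smul_latticeHull hV, hδ n]
  have hfin : ∀ n, Finite (boxSlice (relLattice V) n) := fun n => by
    have : Finite (coneSlice (relLattice V) n) := Nat.finite_of_card_ne_zero (by
      rw [hcone, ← Nat.pos_iff_ne_zero]
      refine Finset.sum_pos' (fun _ _ => Nat.zero_le _) ⟨0, Finset.mem_range.2 hq, ?_⟩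
      simpa using Nat.choose_pos (by omega))
    exact Finite.Set.subset (coneSlice (relLattice V) n) fun t ht =>
      ⟨ht.1, fun i => (ht.2.1 i).1, ht.2.2⟩
  have hsum : ∀ t ∈ relLattice V, ∃ z : ℤ, (z : ℝ) = ∑ i, t i := fun t ht => (mem_relLattice.1 ht).2
  have hbox : ∀ n, Nat.card (boxSlice (relLattice V) n) =
      ∑ j ∈ Finset.range q, if j * (k + 1) = n then 1 else 0 :=
    eq_of_sum_mul_choose_eq (d := d) fun n => by
      rw [← card_coneSlice intLattice_le_relLattice hsum hfin, hcone, sum_ite_choose_eq]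
  have hbox1 : ∀ j < q, Nat.card (boxSlice (relLattice V) (j * (k + 1))) = 1 := fun j hj => by
    rw [hbox, Finset.sum_eq_single j (fun i _ hij => if_neg fun h => hij
      (Nat.eq_of_mul_eq_mul_right k.succ_pos h)) (fun h => absurd (Finset.mem_range.2 hj) h),
      if_pos rfl]
  have hfract : ∀ t : Fin (d + 1) → ℝ, t - (fun i => Int.fract (t i)) ∈ intLattice (Fin (d + 1)) :=
    fun t => mem_intLattice.2 fun i => ⟨⌊t i⌋, by simp⟩
  have hfractL : ∀ t ∈ relLattice V, (fun i => Int.fract (t i)) ∈ relLattice V := fun t ht => by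
    have := (relLattice V).sub_mem ht (intLattice_le_relLattice (hfract t))
    rwa [sub_sub_cancel] at this
  have hex : ∀ t, ∃ j, t ∈ relLattice V →
      j < q ∧ (fun i => Int.fract (t i)) ∈ boxSlice (relLattice V) (j * (k + 1)) := by
    intro t
    by_cases ht : t ∈ relLattice V
    swap
    · exact ⟨0, fun h => absurd h ht⟩
    obtain ⟨z, hz⟩ := hsum _ (hfractL t ht)
    have hz0 : 0 ≤ z := by
      have : (0 : ℝ) ≤ z := by rw [hz]; exact Finset.sum_nonneg fun i _ => Int.fract_nonneg _
      exact_mod_cast this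
    obtain ⟨n, rfl⟩ := Int.eq_ofNat_of_zero_le hz0
    have hmem : (fun i => Int.fract (t i)) ∈ boxSlice (relLattice V) n :=
      ⟨hfractL t ht, fun i => ⟨Int.fract_nonneg _, Int.fract_lt_one _⟩, by simpa using hz.symm⟩
    have hne : Nat.card (boxSlice (relLattice V) n) ≠ 0 := by
      have := hfin n
      have : Nonempty (boxSlice (relLattice V) n) := ⟨⟨_, hmem⟩⟩
      exact Nat.card_pos.ne'
    rw [hbox] at hne
    obtain ⟨j, hj, hjn⟩ := Finset.exists_ne_zero_of_sum_ne_zero hne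
    have hjn' : j * (k + 1) = n := by
      by_contra h
      exact hjn (if_neg h)
    exact ⟨j, fun _ => ⟨Finset.mem_range.1 hj, hjn' ▸ hmem⟩⟩
  choose h hh using hex
  refine ⟨h, intLattice_le_relLattice, fun t ht => (hh t ht).1, fun t ht => ?_,
    fun s hs t ht hst => ?_, fun j hj => ?_, hint⟩
  · rw [(hh t ht).2.2.2]
    push_cast
    rfl
  · have h1 := (hh s hs).2
    have h2 := (hh t ht).2
    rw [hst] at h1
    have := (Nat.card_eq_one_iff_unique.1 (hbox1 _ (hh t ht).1)).1
    have h3 : (fun i => Int.fract (s i)) = fun i => Int.fract (t i) :=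
      congrArg Subtype.val (Subsingleton.elim (⟨_, h1⟩ : boxSlice (relLattice V) _) ⟨_, h2⟩)
    have h4 := (intLattice _).sub_mem (hfract s) (hfract t)
    rwa [h3, sub_sub_sub_cancel_right] at h4
  · obtain ⟨⟨t, ht⟩⟩ := (Nat.card_eq_one_iff_unique.1 (hbox1 j hj)).2
    refine ⟨t, ht.1, ?_⟩
    have h1 := (hh t ht.1).2.2.2
    have h2 : ∑ i, Int.fract (t i) = ∑ i, t i :=
      Finset.sum_congr rfl fun i _ => Int.fract_eq_self.2 (ht.2.1 i)
    rw [h2, ht.2.2] at h1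
    exact (Nat.eq_of_mul_eq_mul_right k.succ_pos (by exact_mod_cast h1)).symm

end Heights

section Targets

lemma sub_mem_intLattice_of_succ {d : ℕ} {V : Fin (d + 1) → Fin d → ℤ} {s t : Fin (d + 1) → ℝ}
    (hs : s ∈ relLattice V) (ht : t ∈ relLattice V)
    (h : ∀ j : Fin d, ∃ z : ℤ, (z : ℝ) = s j.succ - t j.succ) :
    s - t ∈ intLattice (Fin (d + 1)) := by
  obtain ⟨a, ha⟩ := (mem_relLattice.1 ((relLattice V).sub_mem hs ht)).2
  choose b hb using h
  refine mem_intLattice.2 (Fin.cases ⟨a - ∑ j, b j, ?_⟩ fun j => ⟨b j, hb j⟩)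
  rw [Fin.sum_univ_succ] at ha
  push_cast
  rw [ha, Finset.sum_congr rfl fun j _ => hb j]
  simp

lemma exists_perm_mem_iff {ι : Type*} [Fintype ι] [DecidableEq ι] {S T : Finset ι}
    (h : S.card = T.card) : ∃ σ : Equiv.Perm ι, ∀ i, σ i ∈ T ↔ i ∈ S := by
  let f : {i // i ∈ S} ≃ {i // i ∈ T} := Fintype.equivOfCardEq (by simpa using h)
  refine ⟨f.extendSubtype, fun i => ⟨fun hi => ?_, fun hi => f.extendSubtype_mem i hi⟩⟩
  by_contra hS
  exact f.extendSubtype_not_mem i hS hi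

lemma unimodEquiv_of_mem_iff {d : ℕ} {V V' : Fin (d + 1) → Fin d → ℤ} {α : Type*}
    {f f' : α → Fin (d + 1) → ℝ} (hV : (homMat V).det ≠ 0) (σ : Equiv.Perm (Fin (d + 1)))
    (hL : ∀ t, t ∈ relLattice V ↔ ∃ a, t - f a ∈ intLattice (Fin (d + 1)))
    (hL' : ∀ t, t ∈ relLattice V' ↔ ∃ a, t - f' a ∈ intLattice (Fin (d + 1)))
    (hf : ∀ a i, f' a (σ i) = f a i) : UnimodEquiv (latticeHull V) (latticeHull V') := by
  refine unimodEquiv_of_relLattice_perm hV σ fun t => ?_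
  rw [hL, hL']
  refine exists_congr fun a => ?_
  rw [mem_intLattice, mem_intLattice]
  refine σ.forall_congr fun i => ?_
  simp [hf]

/-- The nonzero vertices of `Δ(A)`. -/
def rowsA {e : ℕ} (A : Fin (e + 1) → ℤ) (i j : Fin (e + 1)) : ℤ :=
  (if i = Fin.last e then A (Fin.last e) - (if j = Fin.last e then 0 else A j) else 0) +
    if i = j then (if j = Fin.last e then 0 else 1) else 0

lemma lastEntry_eq {e : ℕ} (A : Fin (e + 1) → ℤ) : lastEntry A = A (Fin.last e) := by
  simp [lastEntry, Fin.last]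

lemma rowA_eq {e : ℕ} (A : Fin (e + 1) → ℤ) (j : Fin (e + 1)) :
    rowA A j = ((A (Fin.last e) - if j = Fin.last e then 0 else A j : ℤ) : ℝ) := by
  have h : (j : ℕ) + 1 < e + 1 ↔ ¬ j = Fin.last e := by rw [Fin.ext_iff, Fin.val_last]; omega
  simp only [rowA, lastEntry_eq, h, ite_not]

lemma convexHull_insert_zero_eq {d : ℕ} {f : Fin d → Fin d → ℝ} {R : Fin d → Fin d → ℤ}
    (h : ∀ i j, f i j = R i j) :
    convexHull ℝ (insert 0 (Set.range f)) = latticeHull (Fin.cons 0 R : Fin (d + 1) → _) := by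
  rw [latticeHull, ← Fin.range_cons]
  congr 2
  funext i
  refine Fin.cases ?_ (fun i => ?_) i
  · funext j
    simp
  · funext j
    simp [h]

lemma simplexA_eq {e : ℕ} (A : Fin (e + 1) → ℤ) :
    simplexA A = latticeHull (Fin.cons 0 (rowsA A) : Fin (e + 2) → _) := by
  refine convexHull_insert_zero_eq fun i j => ?_
  have h : (i : ℕ) + 1 < e + 1 ↔ ¬ i = Fin.last e := by rw [Fin.ext_iff, Fin.val_last]; omega
  simp only [h, ite_not]
  split_ifs with hi
  · subst hi
    by_cases hj : j = Fin.last e <;> simp [rowsA, rowA_eq, hj, eq_comm (a := Fin.last e)]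
  · by_cases hij : i = j
    · subst hij
      simp [rowsA, hi]
    · simp [rowsA, hi, hij, Ne.symm hij]

lemma mem_relLattice_cons {d : ℕ} {R : Fin d → Fin d → ℤ} {t : Fin (d + 1) → ℝ} :
    t ∈ relLattice (Fin.cons 0 R : Fin (d + 1) → _) ↔
      (∀ j, ∃ z : ℤ, (z : ℝ) = ∑ i : Fin d, t i.succ * R i j) ∧ ∃ z : ℤ, (z : ℝ) = ∑ i, t i := by
  simp only [mem_relLattice, Fin.sum_univ_succ (n := d), Fin.cons_zero, Fin.cons_succ,
    Pi.zero_apply, Int.cast_zero, mul_zero, zero_add]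

lemma sum_mul_rowsA {e : ℕ} (A : Fin (e + 1) → ℤ) (t : Fin (e + 1) → ℝ) (j : Fin (e + 1)) :
    ∑ i, t i * rowsA A i j =
      t (Fin.last e) * (A (Fin.last e) - (if j = Fin.last e then 0 else A j)) +
        if j = Fin.last e then 0 else t j := by
  simp only [rowsA, Int.cast_add, mul_add, Finset.sum_add_distrib, Int.cast_ite, Int.cast_zero,
    mul_ite, mul_zero, Finset.sum_ite_eq', Finset.mem_univ, if_true, Int.cast_one, mul_one,
    Int.cast_sub]

/-- The relations among the vertices of `Δ(A)` are generated by the vector with entries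
`a_j / a_d` and `1 / a_d`. -/
lemma mem_relLattice_rowsA {e : ℕ} {A : Fin (e + 1) → ℤ} (hA : A (Fin.last e) ≠ 0)
    {x : Fin (e + 2) → ℝ} (hx : ∀ j, j ≠ Fin.last e → x j.succ = A j / A (Fin.last e))
    (hxl : x (Fin.last e).succ = 1 / A (Fin.last e)) (hs : ∃ z : ℤ, (z : ℝ) = ∑ i, x i)
    (t : Fin (e + 2) → ℝ) :
    t ∈ relLattice (Fin.cons 0 (rowsA A) : Fin (e + 2) → _) ↔
      ∃ c : ℤ, t - c • x ∈ intLattice (Fin (e + 2)) := by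
  have hA' : (A (Fin.last e) : ℝ) ≠ 0 := by exact_mod_cast hA
  have hxm : x ∈ relLattice (Fin.cons 0 (rowsA A) : Fin (e + 2) → _) := by
    refine mem_relLattice_cons.2 ⟨fun j => ⟨1, ?_⟩, hs⟩
    rw [sum_mul_rowsA A fun i => x i.succ, hxl]
    split_ifs with hj
    · field_simp
      simp
    · rw [hx j hj]
      field_simp
      push_cast
      ring
  constructor
  · intro ht
    have h1 := (mem_relLattice_cons.1 ht).1
    simp only [sum_mul_rowsA A fun i => t i.succ] at h1
    obtain ⟨c, hc⟩ := h1 (Fin.last e)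
    simp only [if_true, Int.cast_zero, sub_zero, add_zero] at hc
    refine ⟨c, sub_mem_intLattice_of_succ ht (AddSubgroup.zsmul_mem _ hxm c) fun j => ?_⟩
    simp only [Pi.smul_apply, zsmul_eq_mul]
    rw [hc]
    by_cases hj : j = Fin.last e
    · subst hj
      refine ⟨0, ?_⟩
      rw [hxl]
      field_simp
      simp
    · obtain ⟨z, hz⟩ := h1 j
      simp only [if_neg hj] at hz
      refine ⟨z - c, ?_⟩
      rw [hx j hj]
      push_cast
      rw [hz, hc]
      field_simp
      ring
  · rintro ⟨c, hc⟩
    have := (relLattice _).add_mem (intLattice_le_relLattice hc) (AddSubgroup.zsmul_mem _ hxm c)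
    rwa [sub_add_cancel] at this

/-- The nonzero vertices of `Δ(B, C)` in the case of two columns with entry `p`. -/
def rowsBC {e : ℕ} (p : ℤ) (b : Fin (e + 1)) (i j : Fin (e + 1)) : ℤ :=
  (if i = b then (if j < b then p - 1 else if j = b then p else 0) else 0) +
  (if i = Fin.last e then (if j ≤ b then 0 else if j = Fin.last e then p else p - 1) else 0) +
    if i = j then (if j = b ∨ j = Fin.last e then 0 else 1) else 0

lemma sum_mul_rowsBC {e : ℕ} (p : ℤ) (b : Fin (e + 1)) (t : Fin (e + 1) → ℝ) (j : Fin (e + 1)) :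
    ∑ i, t i * rowsBC p b i j =
      t b * (if j < b then p - 1 else if j = b then p else 0) +
      t (Fin.last e) * (if j ≤ b then 0 else if j = Fin.last e then p else p - 1) +
        if j = b ∨ j = Fin.last e then 0 else t j := by
  simp only [rowsBC, Int.cast_add, mul_add, Finset.sum_add_distrib, Int.cast_ite, Int.cast_zero,
    mul_ite, mul_zero, Finset.sum_ite_eq', Finset.mem_univ, if_true, Int.cast_one, mul_one,
    Int.cast_sub]

lemma mem_relLattice_rowsBC {e : ℕ} {p : ℤ} (hp : p ≠ 0) {b : Fin (e + 1)} (hb : b < Fin.last e)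
    {x y : Fin (e + 2) → ℝ} (hx : ∀ j : Fin (e + 1), x j.succ = if j ≤ b then 0 else 1 / (p : ℝ))
    (hy : ∀ j : Fin (e + 1), y j.succ = if j ≤ b then 1 / (p : ℝ) else 0)
    (hxs : ∃ z : ℤ, (z : ℝ) = ∑ i, x i) (hys : ∃ z : ℤ, (z : ℝ) = ∑ i, y i)
    (t : Fin (e + 2) → ℝ) :
    t ∈ relLattice (Fin.cons 0 (rowsBC p b) : Fin (e + 2) → _) ↔
      ∃ c : ℤ × ℤ, t - (c.1 • x + c.2 • y) ∈ intLattice (Fin (e + 2)) := by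
  have hp' : (p : ℝ) ≠ 0 := by exact_mod_cast hp
  have hlb : ¬ Fin.last e ≤ b := not_le.2 hb
  have hcases : ∀ j : Fin (e + 1), j < b ∨ j = b ∨ j = Fin.last e ∨ (b < j ∧ j ≠ Fin.last e) := by
    intro j
    rcases lt_trichotomy j b with h | h | h
    · exact Or.inl h
    · exact Or.inr (Or.inl h)
    · by_cases hj : j = Fin.last e
      · exact Or.inr (Or.inr (Or.inl hj))
      · exact Or.inr (Or.inr (Or.inr ⟨h, hj⟩))
  have hxm : x ∈ relLattice (Fin.cons 0 (rowsBC p b) : Fin (e + 2) → _) := by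
    refine mem_relLattice_cons.2 ⟨fun j => ⟨if j ≤ b then 0 else 1, ?_⟩, hxs⟩
    rw [sum_mul_rowsBC p b fun i => x i.succ]
    simp only [hx, if_neg hlb, le_refl, if_true]
    rcases hcases j with h | rfl | rfl | ⟨h, h'⟩
    · simp [h.le]
    · simp
    · simp [hlb, hp']
    · simp [h.not_ge, h', h.ne']
      field_simp
      ring
  have hym : y ∈ relLattice (Fin.cons 0 (rowsBC p b) : Fin (e + 2) → _) := by
    refine mem_relLattice_cons.2 ⟨fun j => ⟨if j ≤ b then 1 else 0, ?_⟩, hys⟩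
    rw [sum_mul_rowsBC p b fun i => y i.succ]
    simp only [hy, if_neg hlb, le_refl, if_true]
    rcases hcases j with h | rfl | rfl | ⟨h, h'⟩
    · simp [h.le, h, h.ne, (h.trans hb).ne]
      field_simp
      ring
    · simp [hp']
    · simp [hlb, hb.not_gt, hb.ne']
    · simp [h.not_ge, h', h.ne', h.not_gt]
  constructor
  · intro ht
    have h1 := (mem_relLattice_cons.1 ht).1
    simp only [sum_mul_rowsBC p b fun i => t i.succ] at h1
    obtain ⟨α, hα⟩ := h1 (Fin.last e)
    obtain ⟨β, hβ⟩ := h1 b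
    simp [-Fin.succ_last, hlb, hb.not_gt, hb.ne'] at hα
    simp at hβ
    refine ⟨(α, β), sub_mem_intLattice_of_succ ht ((relLattice _).add_mem
      (AddSubgroup.zsmul_mem _ hxm α) (AddSubgroup.zsmul_mem _ hym β)) fun j => ?_⟩
    simp only [Pi.add_apply, Pi.smul_apply]
    simp only [zsmul_eq_mul, hx, hy, hα, hβ]
    obtain ⟨z, hz⟩ := h1 j
    rcases hcases j with h | rfl | rfl | ⟨h, h'⟩
    · refine ⟨z - β, ?_⟩
      simp [h.le, h, h.ne, (h.trans hb).ne] at hz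
      push_cast
      rw [hz, hβ]
      simp only [h.le, if_true]
      field_simp
      ring
    · refine ⟨0, ?_⟩
      simp [hp']
    · refine ⟨0, ?_⟩
      simp [-Fin.succ_last, hlb, hp']
    · refine ⟨z - α, ?_⟩
      simp [-Fin.succ_last, h.not_ge, h', h.ne', h.not_gt] at hz
      push_cast
      rw [hz, hα]
      simp only [h.not_ge, if_false]
      field_simp
      ring
  · rintro ⟨c, hc⟩
    have := (relLattice _).add_mem (intLattice_le_relLattice hc) ((relLattice _).add_mem
      (AddSubgroup.zsmul_mem _ hxm c.1) (AddSubgroup.zsmul_mem _ hym c.2))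
    rwa [sub_add_cancel] at this

lemma simplexBC_eq {e s : ℕ} {p : ℤ} {B : Fin (s + 1) → ℤ} {C : Fin (e + 1) → ℤ} (hs : s < e)
    (hB : ∀ j, j ≠ Fin.last s → B j = 1) (hBl : B (Fin.last s) = p)
    (hC : ∀ j : Fin (e + 1), (j : ℕ) ≤ s → C j = p) (hC' : ∀ j : Fin (e + 1), s < (j : ℕ) → j ≠ Fin.last e → C j = 1)
    (hCl : C (Fin.last e) = p) :
    simplexBC (s + 1) B C =
      latticeHull (Fin.cons 0 (rowsBC p ⟨s, by omega⟩) : Fin (e + 2) → _) := by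
  refine convexHull_insert_zero_eq fun i j => ?_
  have h1 : (i : ℕ) + 1 = s + 1 ↔ i = ⟨s, by omega⟩ := by rw [Fin.ext_iff]; simp
  have h2 : (i : ℕ) + 1 = e + 1 ↔ i = Fin.last e := by rw [Fin.ext_iff, Fin.val_last]; omega
  simp only [h1, h2]
  split_ifs with hi hi'
  · subst hi
    have h3 : (⟨s, by omega⟩ : Fin (e + 1)) ≠ Fin.last e := by
      rw [Ne, Fin.ext_iff, Fin.val_last]; exact hs.ne
    simp only [rowB, rowsBC, lastEntry_eq, hBl, if_neg h3, if_true, add_zero]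
    rcases lt_trichotomy (j : ℕ) s with h | h | h
    · have h4 : j < ⟨s, by omega⟩ := h
      have h5 : (⟨j, by omega⟩ : Fin (s + 1)) ≠ Fin.last s := by
        rw [Ne, Fin.ext_iff, Fin.val_last]; exact h.ne
      rw [dif_pos (by omega), hB _ h5, if_pos h4, if_neg h4.ne', add_zero]
    · have h4 : j = ⟨s, by omega⟩ := Fin.ext h
      rw [dif_neg (by omega), if_pos (by omega)]
      simp [h4]
    · have h4 : (⟨s, by omega⟩ : Fin (e + 1)) < j := h
      rw [dif_neg (by omega), if_neg (by omega)]
      simp [h4.not_gt, h4.ne, h4.ne']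
  · subst hi'
    simp only [rowsBC, if_neg hi, if_true, zero_add, rowA_eq, hCl]
    rcases le_or_gt (j : ℕ) s with h | h
    · have h4 : j ≤ ⟨s, by omega⟩ := h
      have h5 : j ≠ Fin.last e := by
        rw [Ne, Fin.ext_iff, Fin.val_last]; omega
      simp [h4, h5, h5.symm, hC j h]
    · have h4 : ¬ j ≤ ⟨s, by omega⟩ := not_le.2 h
      by_cases h5 : j = Fin.last e
      · subst h5
        simp [h4]
      · simp [h4, h5, Ne.symm h5, hC' j h h5]
  · by_cases hij : i = j
    · subst hij
      simp [rowsBC, hi, hi']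
    · simp [rowsBC, hi, hi', hij, Ne.symm hij]

end Targets

section Equivalences

variable {p m e : ℕ} {V : Fin (e + 2) → Fin (e + 1) → ℤ}

lemma unimodEquiv_simplexA_ones (hp : p.Prime) (hV : (homMat V).det ≠ 0) (hd : e + 2 = p ^ 2 * m)
    (hL : ∀ t, t ∈ relLattice V ↔
      ∃ c : ℤ, t - c • (fun _ => 1 / (p : ℝ) ^ 2) ∈ intLattice (Fin (e + 2))) :
    UnimodEquiv (latticeHull V) (simplexA fun i : Fin (e + 1) =>
      if (i : ℕ) < p ^ 2 * m - 2 then 1 else (p ^ 2 : ℤ)) := by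
  have hp0 : (p : ℝ) ≠ 0 := by exact_mod_cast hp.ne_zero
  have he : p ^ 2 * m - 2 = e := by omega
  rw [simplexA_eq]
  refine unimodEquiv_of_mem_iff hV (Equiv.refl _) hL
    (mem_relLattice_rowsA (x := fun _ => 1 / (p : ℝ) ^ 2) ?_ (fun j hj => ?_) ?_ ⟨m, ?_⟩)
    fun a i => rfl
  · simp [he, hp.ne_zero]
  · have : (j : ℕ) < e := Fin.val_lt_last hj
    simp [he, this]
  · simp [he]
  · have : (e : ℝ) + 2 = p ^ 2 * m := by exact_mod_cast hd
    simp only [Finset.sum_const, Finset.card_univ, Fintype.card_fin, nsmul_eq_mul]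
    push_cast
    rw [this]
    field_simp

lemma unimodEquiv_simplexA_two (hp : p.Prime) (hm : 0 < m) (hV : (homMat V).det ≠ 0)
    {S : Finset (Fin (e + 2))} (hS : S.card = p * m) (hSc : Sᶜ.card + m = p ^ 2 * m)
    (hL : ∀ t, t ∈ relLattice V ↔ ∃ c : ℤ, t - c •
      (fun i => if i ∈ S then 1 / (p : ℝ) ^ 2 else 1 / (p : ℝ)) ∈ intLattice (Fin (e + 2))) :
    UnimodEquiv (latticeHull V) (simplexA fun i : Fin (e + 1) =>
      if (i : ℕ) < p * m - 1 then 1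
      else if (i : ℕ) < p * m - 1 + ((p ^ 2 - 1) * m - 1) then (p : ℤ) else (p ^ 2 : ℤ)) := by
  have hp0 : (p : ℝ) ≠ 0 := by exact_mod_cast hp.ne_zero
  have hpm : 2 * m ≤ p * m := Nat.mul_le_mul_right m hp.two_le
  have hppm : p * m * 2 ≤ p ^ 2 * m := by nlinarith [hp.two_le]
  have hsub : (p ^ 2 - 1) * m = p ^ 2 * m - m := by rw [Nat.sub_mul, one_mul]
  have hcard : p * m + Sᶜ.card = e + 2 := by
    rw [← hS, Finset.card_add_card_compl, Fintype.card_fin]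
  have he : p * m - 1 + ((p ^ 2 - 1) * m - 1) = e := by omega
  have hlt : ¬ e < p * m - 1 := by omega
  let b : Fin (e + 2) := ⟨p * m, by omega⟩
  let T : Finset (Fin (e + 2)) := insert (Fin.last _) (Finset.Ioo 0 b)
  have hT : T.card = p * m := by
    rw [Finset.card_insert_of_notMem, Fin.card_Ioo]
    · simp only [b, Fin.val_zero]
      omega
    · rw [Finset.mem_Ioo, not_and, not_lt]
      exact fun _ => Fin.le_last b
  have hTc : Tᶜ.card + m = p ^ 2 * m := by
    have := T.card_add_card_compl
    rw [hT, Fintype.card_fin] at this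
    omega
  have hmem : ∀ j : Fin (e + 1), j ≠ Fin.last e → (j.succ ∈ T ↔ (j : ℕ) < p * m - 1) := by
    intro j hj
    simp only [T, b, Finset.mem_insert, Finset.mem_Ioo, Fin.lt_def, Fin.val_succ, Fin.val_zero,
      ← Fin.succ_last, Fin.succ_inj, hj, false_or]
    omega
  obtain ⟨σ, hσ⟩ := exists_perm_mem_iff (hS.trans hT.symm)
  rw [simplexA_eq]
  refine unimodEquiv_of_mem_iff hV σ hL (mem_relLattice_rowsA
    (x := fun i => if i ∈ T then 1 / (p : ℝ) ^ 2 else 1 / (p : ℝ)) ?_ (fun j hj => ?_) ?_ ⟨p * m, ?_⟩)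
    fun a i => by simp [hσ]
  · simp [he, hp.ne_zero, hlt]
  · have : (j : ℕ) < e := Fin.val_lt_last hj
    simp only [hmem j hj, he, this, Fin.val_last, hlt, lt_irrefl, if_true, if_false]
    split_ifs
    · simp
    · push_cast
      field_simp
  · have : (Fin.last e).succ ∈ T := Finset.mem_insert_self _ _
    simp [he, hlt, T]
  · have h1 : (Tᶜ.card : ℝ) = p ^ 2 * m - m := by
      rw [eq_sub_iff_add_eq]
      exact_mod_cast hTc
    rw [Finset.sum_ite, Finset.sum_const, Finset.sum_const, Finset.filter_mem_eq_inter,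
      Finset.univ_inter, Finset.filter_notMem_eq_sdiff, ← Finset.compl_eq_univ_sdiff, hT,
      nsmul_eq_mul, nsmul_eq_mul, h1]
    push_cast
    field_simp
    ring

lemma unimodEquiv_simplexBC (hp : p.Prime) (hm : 0 < m) (hV : (homMat V).det ≠ 0)
    {S : Finset (Fin (e + 2))} (hS : S.card = p * m) (hSc : Sᶜ.card = p ^ 2 * m)
    (hL : ∀ t, t ∈ relLattice V ↔ ∃ a b : ℤ, t - (a • (fun i => if i ∈ S then 0 else 1 / (p : ℝ)) +
      b • (fun i => if i ∈ S then 1 / (p : ℝ) else 0)) ∈ intLattice (Fin (e + 2))) :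
    UnimodEquiv (latticeHull V) (simplexBC (p * m)
      (fun i : Fin (p * m) => if (i : ℕ) < p * m - 1 then 1 else (p : ℤ))
      (fun i : Fin (e + 1) => if (i : ℕ) < p * m then (p : ℤ)
        else if (i : ℕ) < p * m + (p ^ 2 * m - 2) then 1 else (p : ℤ))) := by
  have hp0 : (p : ℝ) ≠ 0 := by exact_mod_cast hp.ne_zero
  have hpz : (p : ℤ) ≠ 0 := by exact_mod_cast hp.ne_zero
  have hpm : 2 * m ≤ p * m := Nat.mul_le_mul_right m hp.two_le
  have hppm : p * m * 2 ≤ p ^ 2 * m := by nlinarith [hp.two_le]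
  have hcard : p * m + Sᶜ.card = e + 2 := by
    rw [← hS, Finset.card_add_card_compl, Fintype.card_fin]
  have he : p * m + (p ^ 2 * m - 2) = e := by omega
  obtain ⟨s, hs⟩ : ∃ s, p * m = s + 1 := ⟨p * m - 1, by omega⟩
  simp only [he]
  rw [hs] at hS ⊢
  have hse : s < e := by omega
  let b : Fin (e + 1) := ⟨s, by omega⟩
  have hb : b < Fin.last e := hse
  let T : Finset (Fin (e + 2)) := Finset.Ioc 0 b.succ
  have hT : T.card = s + 1 := by
    rw [Fin.card_Ioc]
    simp [b]
  have hTc : Tᶜ.card = p ^ 2 * m := by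
    have := T.card_add_card_compl
    rw [hT, Fintype.card_fin] at this
    omega
  have hmem : ∀ j : Fin (e + 1), j.succ ∈ T ↔ j ≤ b := fun j => by
    simp [T, Fin.succ_le_succ_iff]
  have hsm : ((s : ℝ) + 1) = p * m := by exact_mod_cast hs.symm
  obtain ⟨σ, hσ⟩ := exists_perm_mem_iff (hS.trans hT.symm)
  rw [simplexBC_eq (p := p) hse]
  rotate_left
  · exact fun j hj => if_pos (Fin.val_lt_last hj)
  · simp
  · exact fun j hj => if_pos (by omega)
  · exact fun j hj hj' => by rw [if_neg (by omega), if_pos (Fin.val_lt_last hj')]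
  · simp
  · have hsum : ∀ u v : ℝ, ∑ i, (if i ∈ T then u else v) = p * m * u + p ^ 2 * m * v := by
      intro u v
      rw [Finset.sum_ite, Finset.sum_const, Finset.sum_const, Finset.filter_mem_eq_inter,
        Finset.univ_inter, Finset.filter_notMem_eq_sdiff, ← Finset.compl_eq_univ_sdiff, hT, hTc,
        nsmul_eq_mul, nsmul_eq_mul]
      push_cast
      rw [hsm]
    refine unimodEquiv_of_mem_iff (f := fun c : ℤ × ℤ =>
      c.1 • (fun i => if i ∈ S then 0 else 1 / (p : ℝ)) +
        c.2 • (fun i => if i ∈ S then 1 / (p : ℝ) else 0)) hV σ (fun t => by rw [hL, Prod.exists])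
      (mem_relLattice_rowsBC (x := fun i => if i ∈ T then 0 else 1 / (p : ℝ))
        (y := fun i => if i ∈ T then 1 / (p : ℝ) else 0) hpz hb (fun j => ?_) (fun j => ?_)
        ⟨p * m, ?_⟩ ⟨m, ?_⟩) fun a i => by simp [hσ]
    · simp [hmem]
    · simp [hmem]
    · rw [hsum]
      push_cast
      field_simp
      ring
    · rw [hsum]
      push_cast
      field_simp
      ring

end Equivalences

lemma ne_zero_of_hasDeltaPolySimplex {d q k : ℕ} {Δ : Set (Fin d → ℝ)} (hq : 2 ≤ q)
    (hδ : HasDeltaPolySimplex d q k Δ) : d ≠ 0 := by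
  rintro rfl
  have h1 : latticePointCount (((k + 1 : ℕ) : ℝ) • Δ) ≤ 1 :=
    (Set.ncard_le_one (Set.toFinite _)).2 fun _ _ _ _ => Subsingleton.elim _ _
  have h2 : ∑ j ∈ Finset.range 2, (if j * (k + 1) ≤ k + 1 then
      (k + 1 - j * (k + 1) + 0).choose 0 else 0) ≤ 1 :=
    (Finset.sum_le_sum_of_subset (Finset.range_mono hq)).trans ((hδ (k + 1)).symm.le.trans h1)
  rw [Finset.sum_range_succ, Finset.sum_range_one] at h2
  simp at h2

theorem stmt_16 (p k d : ℕ) (hp : p.Prime) (Δ : Set (Fin d → ℝ))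
    (hsimp : IsLatticeSimplex Δ)
    (hδ : HasDeltaPolySimplex d (p^2) k Δ)
    (hpyr : ¬ ∃ (e : ℕ) (h : d = e + 1) (Q : Set (Fin e → ℝ)),
      IsLatticeSimplex Q ∧
      UnimodEquiv ((fun x : Fin d → ℝ => x ∘ (finCongr h.symm)) '' Δ) (Pyr Q)) :
    (d = p^2*(k+1) - 1 ∧
      UnimodEquiv Δ (simplexA (fun i : Fin d =>
        if (i : ℕ) < p^2*(k+1) - 2 then 1 else (p^2 : ℤ)))) ∨
    (d = (p^2 + p - 1)*(k+1) - 1 ∧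
      UnimodEquiv Δ (simplexA (fun i : Fin d =>
        if (i : ℕ) < p*(k+1) - 1 then 1
        else if (i : ℕ) < p*(k+1) - 1 + ((p^2 - 1)*(k+1) - 1) then (p : ℤ)
        else (p^2 : ℤ)))) ∨
    (d = p*(p+1)*(k+1) - 1 ∧
      UnimodEquiv Δ (simplexBC (p*(k+1))
        (fun i : Fin (p*(k+1)) =>
          if (i : ℕ) < p*(k+1) - 1 then 1 else (p : ℤ))
        (fun i : Fin d =>
          if (i : ℕ) < p*(k+1) then (p : ℤ)
          else if (i : ℕ) < p*(k+1) + (p^2*(k+1) - 2) then 1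
          else (p : ℤ)))) := by
  have hq : 2 ≤ p ^ 2 := hp.two_le.trans (Nat.le_self_pow two_ne_zero p)
  obtain _ | e := d
  · exact absurd rfl (ne_zero_of_hasDeltaPolySimplex hq hδ)
  obtain ⟨V, hV, rfl⟩ := hsimp
  have hdet := det_homMat_ne_zero hV
  have hint : ∀ i, ∃ t ∈ relLattice V, ¬ ∃ z : ℤ, (z : ℝ) = t i := by
    by_contra! hcon
    obtain ⟨i, hi⟩ := hcon
    obtain ⟨Q, hQ, hVQ⟩ := exists_pyramid hV i hi
    refine hpyr ⟨e, rfl, Q, hQ, ?_⟩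
    have h1 : (fun x : Fin (e + 1) → ℝ => x ∘ finCongr (rfl : e + 1 = e + 1)) = id := by
      funext x
      simp
    rw [h1, Set.image_id]
    exact hVQ
  obtain ⟨h, H⟩ := exists_heightData (by omega) hdet hδ hint
  have hk : 0 < k + 1 := k.succ_pos
  obtain ⟨hd, hL⟩ | ⟨S, hS, ⟨hSc, hL⟩ | ⟨hSc, hL⟩⟩ := H.classification hp hk
  · rw [Fintype.card_fin] at hd
    exact Or.inl ⟨by omega, unimodEquiv_simplexA_ones hp hdet hd hL⟩
  · refine Or.inr (Or.inl ⟨?_, unimodEquiv_simplexA_two hp hk hdet hS hSc hL⟩)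
    have hcard := S.card_add_card_compl
    rw [Fintype.card_fin] at hcard
    rw [Nat.sub_mul, Nat.add_mul]
    omega
  · refine Or.inr (Or.inr ⟨?_, unimodEquiv_simplexBC hp hk hdet hS hSc hL⟩)
    have hcard := S.card_add_card_compl
    rw [Fintype.card_fin] at hcard
    have : p * (p + 1) * (k + 1) = p * (k + 1) + p ^ 2 * (k + 1) := by ring
    omega
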